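/- arXiv:1711.09118 — 2 statements merged into one kernel-verified Lean document; each statement's English description precedes it below -/
import Mathlib

section
/- Let a ∈ ℝ and let h, u be real C² functions on the punctured unit disc B₁* such that Δh = 0 and Δu = ((∂h/∂x + a·y/|z|²)² + (∂h/∂y − a·x/|z|²)²)·e^{2u}. Assume the holomorphic function F(z) := ∂h/∂x − i·∂h/∂y has finite order N at 0, and set n := N if a = 0 and n := min(−1, N) if a ≠ 0. Assume there exist β < n+1 and a constant c such that u(z) + β·log|z| → c as z → 0. Let M_θ and M_r be the matrix components of the connection form ω_∇ determined by (h,u,a). Then lim_{z→0} M_θ(z) = (β/2)·[[0,−1],[1,0]], and there exists ε > 0 such that |z|^{−ε}·(|z|·M_r(z) − (β/2)·𝟙) → 0 as z → 0. -/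
/-!
Adding `β log |z|` to `u` removes the logarithm: `w = u + β log |z|` tends to `c`, and since
`e^u = O(|z|^{-β})` the equation for `u` gives `Δw = O(|z|^{ε-2})` for some `ε > 0`. Such a `w`
satisfies `w - c = O(|z|^ε)` and `dw = O(|z|^{ε-1})`, while `e^u (dh - a dθ) = O(|z|^{ε-1})` by the
choice of `β`. So every entry of `|z| M_r` and `M_θ` is `O(|z|^ε)` apart from the contribution of
`-β d log |z|`, which is `-β` on `r ∂_r` and `0` on `∂_θ`.

The two estimates for `w` hold in every dimension `≥ 2` and come from the maximum principle. If `σ`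
is the reflection in a hyperplane, `w - w ∘ σ` vanishes on that hyperplane, so on a half ball it is
dominated by a harmonic barrier plus a concave function of the distance to the hyperplane.
Reflecting one point of a sphere to another bounds the oscillation of `w` on spheres about `0`;
comparison with `|z|^δ` as `δ → 0` passes from the sphere to its centre, across the singularity.
Centring the reflection at a point `p ≠ 0` bounds the gradient of `w` at `p`.
-/

open Complex Real Set Topology Filter Matrix

/-- Partial derivative in the `x`-direction of a function on `ℂ ≅ ℝ²`. -/
noncomputable def pdx (f : ℂ → ℝ) (z : ℂ) : ℝ := deriv (fun t : ℝ => f (z + t)) 0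

/-- Partial derivative in the `y`-direction. -/
noncomputable def pdy (f : ℂ → ℝ) (z : ℂ) : ℝ := deriv (fun t : ℝ => f (z + t * Complex.I)) 0

/-- The flat Laplacian `Δ = ∂²/∂x² + ∂²/∂y²`. -/
noncomputable def lap (f : ℂ → ℝ) (z : ℂ) : ℝ := pdx (pdx f) z + pdy (pdy f) z

/-- The punctured open unit disc `B₁* = {0 < |z| < 1}`. -/
def PDisc : Set ℂ := {z : ℂ | 0 < ‖z‖ ∧ ‖z‖ < 1}

/-- Radial derivative `∂f/∂r` expressed in Cartesian coordinates. -/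
noncomputable def pdr (f : ℂ → ℝ) (z : ℂ) : ℝ :=
  (z.re * pdx f z + z.im * pdy f z) / ‖z‖

/-- Angular derivative `∂f/∂θ` expressed in Cartesian coordinates. -/
noncomputable def pdθ (f : ℂ → ℝ) (z : ℂ) : ℝ :=
  -z.im * pdx f z + z.re * pdy f z

/-- `ω₁₁(∂_r)` where `2ω₁₁ = e^u (dh − a dθ) − du`. -/
noncomputable def ω11r (h u : ℂ → ℝ) (a : ℝ) (z : ℂ) : ℝ :=
  (Real.exp (u z) * pdr h z - pdr u z) / 2

/-- `ω₁₁(∂_θ)`. -/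
noncomputable def ω11θ (h u : ℂ → ℝ) (a : ℝ) (z : ℂ) : ℝ :=
  (Real.exp (u z) * (pdθ h z - a) - pdθ u z) / 2

/-- `ω₂₂(∂_r)` where `2ω₂₂ = −e^u (dh − a dθ) − du`. -/
noncomputable def ω22r (h u : ℂ → ℝ) (a : ℝ) (z : ℂ) : ℝ :=
  -(Real.exp (u z) * pdr h z + pdr u z) / 2

/-- `ω₂₂(∂_θ)`. -/
noncomputable def ω22θ (h u : ℂ → ℝ) (a : ℝ) (z : ℂ) : ℝ :=
  -(Real.exp (u z) * (pdθ h z - a) + pdθ u z) / 2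

/-- The `dθ`-component `M_θ` of the connection form `ω_∇ = M_r dr + M_θ dθ`. -/
noncomputable def Mθ (h u : ℂ → ℝ) (a : ℝ) (z : ℂ) : Matrix (Fin 2) (Fin 2) ℝ :=
  !![ω11θ h u a z, -‖z‖ * ω11r h u a z;
     ‖z‖ * ω22r h u a z, ω22θ h u a z]

/-- The `dr`-component `M_r` of the connection form. -/
noncomputable def Mr (h u : ℂ → ℝ) (a : ℝ) (z : ℂ) : Matrix (Fin 2) (Fin 2) ℝ :=
  !![ω11r h u a z, ω11θ h u a z / ‖z‖;
     -ω22θ h u a z / ‖z‖, ω22r h u a z]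

namespace ConicalSpecialKahler

open InnerProductSpace Laplacian Asymptotics Metric

section Comparison

variable {E : Type*} [NormedAddCommGroup E]

theorem tendsto_add_smul_nhds_zero [NormedSpace ℝ E] (x v : E) :
    Tendsto (fun t : ℝ => x + t • v) (𝓝 0) (𝓝 x) :=
  Continuous.tendsto' (by fun_prop) _ _ (by simp)

theorem deriv_deriv_comp_add_smul [NormedSpace ℝ E] {f : E → ℝ} {x : E}
    (hf : ContDiffAt ℝ 2 f x) (v : E) :
    deriv (deriv fun t : ℝ => f (x + t • v)) 0 = iteratedFDeriv ℝ 2 f x ![v, v] := by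
  have hfirst : deriv (fun t : ℝ => f (x + t • v)) =ᶠ[𝓝 0]
      fun t => iteratedFDeriv ℝ 1 f (x + t • v) fun _ => v := by
    filter_upwards [(tendsto_add_smul_nhds_zero x v).eventually (hf.eventually (by simp))] with t ht
    rw [(ht.differentiableAt (by simp)).deriv_comp_add_smul, iteratedFDeriv_one_apply]
  have hconst : ![v, v] = fun _ => v := by ext i; fin_cases i <;> rfl
  have hsecond := ContDiffAt.deriv_fderiv_add_smul (n := 1) (f := f) (x := x) (t := (0 : ℝ))
    (y := v) (by simpa [one_add_one_eq_two] using hf)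
  rw [hfirst.deriv_eq, hsecond, zero_smul, add_zero, hconst]

theorem deriv_deriv_nonpos_of_isLocalMax {g : ℝ → ℝ} {x : ℝ} (hg : ContinuousAt g x)
    (hmax : IsLocalMax g x) : deriv (deriv g) x ≤ 0 := by
  by_contra! hpos
  have hmin : IsLocalMin g x := isLocalMin_of_deriv_deriv_pos hpos hmax.deriv_eq_zero hg
  have hconst : g =ᶠ[𝓝 x] fun _ => g x := by
    filter_upwards [hmax, hmin] with t h₁ h₂ using le_antisymm h₁ h₂
  have hzero : deriv (deriv g) x = 0 := by rw [hconst.deriv.deriv_eq]; simp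
  exact hpos.ne' hzero

theorem contDiffAt_comp_add_linearIsometryEquiv [NormedSpace ℝ E] {n : WithTop ℕ∞}
    (T : E ≃ₗᵢ[ℝ] E) {p x : E} {f : E → ℝ} (hf : ContDiffAt ℝ n f (p + T x)) :
    ContDiffAt ℝ n (fun y => f (p + T y)) x :=
  hf.comp x (contDiffAt_const.add T.contDiff.contDiffAt)

variable [InnerProductSpace ℝ E] [FiniteDimensional ℝ E]

theorem laplacian_eq_sum_deriv_deriv {ι : Type*} [Fintype ι] (b : OrthonormalBasis ι ℝ E)
    {f : E → ℝ} {x : E} (hf : ContDiffAt ℝ 2 f x) :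
    Δ f x = ∑ i, deriv (deriv fun t : ℝ => f (x + t • b i)) 0 := by
  simp only [laplacian_eq_iteratedFDeriv_orthonormalBasis f b, deriv_deriv_comp_add_smul hf]

theorem laplacian_nonpos_of_isLocalMax {f : E → ℝ} {x : E} (hf : ContDiffAt ℝ 2 f x)
    (hmax : IsLocalMax f x) : Δ f x ≤ 0 := by
  rw [laplacian_eq_sum_deriv_deriv (stdOrthonormalBasis ℝ E) hf]
  refine Finset.sum_nonpos fun i _ => deriv_deriv_nonpos_of_isLocalMax ?_ ?_
  · exact ContinuousAt.comp (by simpa using hf.continuousAt) (by fun_prop)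
  · filter_upwards [(tendsto_add_smul_nhds_zero x _).eventually hmax] with t ht
    simpa using ht

theorem le_of_laplacian_lt {K U : Set E} (hK : IsCompact K) (hU : IsOpen U) (hUK : U ⊆ K)
    {f g : E → ℝ} (hf : ContinuousOn f K) (hg : ContinuousOn g K)
    (hf₂ : ∀ x ∈ U, ContDiffAt ℝ 2 f x) (hg₂ : ∀ x ∈ U, ContDiffAt ℝ 2 g x)
    (hΔ : ∀ x ∈ U, Δ g x < Δ f x) (hle : ∀ x ∈ K \ U, f x ≤ g x) {x : E} (hx : x ∈ K) :
    f x ≤ g x := by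
  obtain ⟨m, hm, hmax⟩ := hK.exists_isMaxOn ⟨x, hx⟩ (hf.sub hg)
  have hxm : f x - g x ≤ f m - g m := hmax hx
  by_cases hmU : m ∈ U
  · have hlocal : IsLocalMax (f - g) m :=
      hmax.isLocalMax (mem_of_superset (hU.mem_nhds hmU) hUK)
    have hnonpos : Δ (f - g) m ≤ 0 :=
      laplacian_nonpos_of_isLocalMax ((hf₂ m hmU).sub (hg₂ m hmU)) hlocal
    rw [(hf₂ m hmU).laplacian_sub (hg₂ m hmU)] at hnonpos
    linarith [hΔ m hmU]
  · linarith [hle m ⟨hm, hmU⟩]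

theorem laplacian_comp_add_linearIsometryEquiv (T : E ≃ₗᵢ[ℝ] E) {p x : E} {f : E → ℝ}
    (hf : ContDiffAt ℝ 2 f (p + T x)) : Δ (fun y => f (p + T y)) x = Δ f (p + T x) := by
  let b := stdOrthonormalBasis ℝ E
  rw [laplacian_eq_sum_deriv_deriv b (contDiffAt_comp_add_linearIsometryEquiv T hf),
    laplacian_eq_sum_deriv_deriv (b.map T) hf]
  simp only [map_add, map_smul, OrthonormalBasis.map_apply, add_assoc]

theorem laplacian_sub_comp_add_linearIsometryEquiv (T : E ≃ₗᵢ[ℝ] E) {p x : E} {f : E → ℝ}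
    (hf : ContDiffAt ℝ 2 f (p + x)) (hfT : ContDiffAt ℝ 2 f (p + T x)) :
    Δ (fun y => f (p + y) - f (p + T y)) x = Δ f (p + x) - Δ f (p + T x) := by
  have htranslate : Δ (fun y => f (p + y)) x = Δ f (p + x) :=
    laplacian_comp_add_linearIsometryEquiv (.refl ℝ E) hf
  rw [← htranslate, ← laplacian_comp_add_linearIsometryEquiv T hfT]
  exact (contDiffAt_comp_add_linearIsometryEquiv (.refl ℝ E) hf).laplacian_sub
    (contDiffAt_comp_add_linearIsometryEquiv T hfT)

end Comparison

section ExplicitLaplacians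

theorem deriv_deriv_rpow_const (p x : ℝ) :
    deriv (deriv fun t : ℝ => t ^ p) x = p * (p - 1) * x ^ (p - 2) := by
  rw [Real.deriv_rpow_const', deriv_const_mul_field, Real.deriv_rpow_const]
  ring_nf

theorem deriv_deriv_comp {φ q : ℝ → ℝ} {t q'' : ℝ} {q' : ℝ → ℝ} (hφ : ContDiffAt ℝ 2 φ (q t))
    (hq : ∀ᶠ s in 𝓝 t, HasDerivAt q (q' s) s) (hq' : HasDerivAt q' q'' t) :
    deriv (deriv (φ ∘ q)) t = deriv (deriv φ) (q t) * q' t ^ 2 + deriv φ (q t) * q'' := by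
  have hq_cont : Tendsto q (𝓝 t) (𝓝 (q t)) := hq.self_of_nhds.continuousAt
  have hfirst : deriv (φ ∘ q) =ᶠ[𝓝 t] (deriv φ ∘ q) * q' := by
    filter_upwards [hq, hq_cont.eventually (hφ.eventually (by simp))] with s hs hφs
    exact ((hφs.differentiableAt (by simp)).hasDerivAt.comp s hs).deriv
  have hφ' : HasDerivAt (deriv φ) (deriv (deriv φ) (q t)) (q t) :=
    ((hφ.derivWithin (m := 1) (by norm_num)).differentiableAt (by simp)).hasDerivAt
  rw [hfirst.deriv_eq, ((hφ'.comp t hq.self_of_nhds).mul hq').deriv]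
  simp only [Function.comp_apply]
  ring

variable {E : Type*} [NormedAddCommGroup E] [InnerProductSpace ℝ E]

theorem contDiffAt_norm_rpow {n : WithTop ℕ∞} (s : ℝ) {x : E} (hx : x ≠ 0) :
    ContDiffAt ℝ n (fun y : E => ‖y‖ ^ s) x :=
  (contDiffAt_norm ℝ hx).rpow_const_of_ne (norm_ne_zero_iff.mpr hx)

variable [FiniteDimensional ℝ E]

theorem laplacian_comp_inner {φ : ℝ → ℝ} {e x : E} (hφ : ContDiffAt ℝ 2 φ (inner ℝ e x)) :
    Δ (fun y => φ (inner ℝ e y)) x = ‖e‖ ^ 2 * deriv (deriv φ) (inner ℝ e x) := by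
  let b := stdOrthonormalBasis ℝ E
  have hcomp : ContDiffAt ℝ 2 (fun y => φ (inner ℝ e y)) x :=
    hφ.comp x (contDiffAt_const.inner ℝ contDiffAt_id)
  have hline (v : E) : deriv (deriv fun t : ℝ => φ (inner ℝ e (x + t • v))) 0 =
      inner ℝ v e ^ 2 * deriv (deriv φ) (inner ℝ e x) := by
    have hq (s : ℝ) : HasDerivAt (fun t : ℝ => inner ℝ e (x + t • v)) (inner ℝ e v) s := by
      simpa [inner_add_right, inner_smul_right] using
        ((hasDerivAt_id s).mul_const (inner ℝ e v)).const_add (inner ℝ e x)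
    have := deriv_deriv_comp (φ := φ) (t := 0) (by simpa using hφ) (.of_forall hq)
      (hasDerivAt_const 0 (inner ℝ e v))
    simpa [Function.comp_def, real_inner_comm v, mul_comm] using this
  rw [laplacian_eq_sum_deriv_deriv b hcomp]
  simp only [hline, ← Finset.sum_mul, b.sum_sq_inner_right]

theorem laplacian_comp_norm_sq {φ : ℝ → ℝ} {x : E} (hφ : ContDiffAt ℝ 2 φ (‖x‖ ^ 2)) :
    Δ (fun y : E => φ (‖y‖ ^ 2)) x =
      4 * ‖x‖ ^ 2 * deriv (deriv φ) (‖x‖ ^ 2) + 2 * Module.finrank ℝ E * deriv φ (‖x‖ ^ 2) := by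
  let b := stdOrthonormalBasis ℝ E
  have hcomp : ContDiffAt ℝ 2 (fun y : E => φ (‖y‖ ^ 2)) x :=
    hφ.comp x (contDiff_norm_sq ℝ).contDiffAt
  have hline (v : E) (hv : ‖v‖ = 1) : deriv (deriv fun t : ℝ => φ (‖x + t • v‖ ^ 2)) 0 =
      4 * inner ℝ v x ^ 2 * deriv (deriv φ) (‖x‖ ^ 2) + 2 * deriv φ (‖x‖ ^ 2) := by
    have hq' (s : ℝ) : HasDerivAt (fun t : ℝ => 2 * inner ℝ v x + 2 * t) 2 s := by
      simpa using ((hasDerivAt_id s).const_mul 2).const_add (2 * inner ℝ v x)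
    have hq (s : ℝ) : HasDerivAt (fun t : ℝ => ‖x + t • v‖ ^ 2) (2 * inner ℝ v x + 2 * s) s := by
      have hexpand (t : ℝ) : ‖x + t • v‖ ^ 2 = ‖x‖ ^ 2 + t * (2 * inner ℝ v x) + t ^ 2 := by
        rw [norm_add_sq_real, inner_smul_right, norm_smul, hv, real_inner_comm, mul_one,
          norm_eq_abs, sq_abs]
        ring
      simpa [hexpand] using (((hasDerivAt_id s).mul_const (2 * inner ℝ v x)).const_add
        (‖x‖ ^ 2)).fun_add (hasDerivAt_pow 2 s)
    have := deriv_deriv_comp (φ := φ) (t := 0) (by simpa using hφ) (.of_forall hq) (hq' 0)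
    simp only [Function.comp_def, zero_smul, add_zero, mul_zero] at this
    rw [this]
    ring
  rw [laplacian_eq_sum_deriv_deriv b hcomp]
  simp only [hline _ (b.norm_eq_one _), Finset.sum_add_distrib, ← Finset.sum_mul, ← Finset.mul_sum,
    b.sum_sq_inner_right, Finset.sum_const, Finset.card_univ, Fintype.card_fin, nsmul_eq_mul]
  ring

theorem laplacian_norm_rpow (s : ℝ) {x : E} (hx : x ≠ 0) :
    Δ (fun y : E => ‖y‖ ^ s) x = s * (s + Module.finrank ℝ E - 2) * ‖x‖ ^ (s - 2) := by
  have hnorm (y : E) (r : ℝ) : (‖y‖ ^ 2) ^ r = ‖y‖ ^ (2 * r) := by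
    rw [← rpow_natCast_mul (norm_nonneg y), Nat.cast_ofNat]
  have hfun : (fun y : E => ‖y‖ ^ s) = fun y => (‖y‖ ^ 2) ^ (s / 2) := by
    simp only [hnorm, mul_div_cancel₀ s two_ne_zero]
  rw [hfun, laplacian_comp_norm_sq (contDiffAt_rpow_const_of_ne (by positivity)),
    deriv_deriv_rpow_const, Real.deriv_rpow_const, hnorm, hnorm]
  have hsplit : ‖x‖ ^ 2 * ‖x‖ ^ (2 * (s / 2 - 2)) = ‖x‖ ^ (s - 2) := by
    rw [← rpow_natCast, ← rpow_add (norm_pos_iff.mpr hx)]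
    ring_nf
  rw [show 2 * (s / 2 - 1) = s - 2 by ring]
  linear_combination s * (s - 2) * hsplit

end ExplicitLaplacians

section Reflection

theorem deriv_deriv_mul_sub (R t : ℝ) : deriv (deriv fun s : ℝ => s * (R - s)) t = -2 := by
  have hderiv : deriv (fun s : ℝ => s * (R - s)) = fun s => R - 2 * s := by
    ext s
    have := ((hasDerivAt_id' s).fun_mul ((hasDerivAt_id' s).const_sub R)).deriv
    linarith
  rw [hderiv]
  simp

variable {E : Type*} [NormedAddCommGroup E] [InnerProductSpace ℝ E]

theorem inner_reflection_orthogonal_singleton (e x : E) :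
    inner ℝ e ((ℝ ∙ e)ᗮ.reflection x) = -inner ℝ e x := by
  rw [← LinearIsometryEquiv.inner_map_map (ℝ ∙ e)ᗮ.reflection,
    Submodule.reflection_orthogonalComplement_singleton_eq_neg, Submodule.reflection_reflection,
    inner_neg_left]

theorem reflection_orthogonal_singleton_of_inner_eq_zero {e x : E} (hx : inner ℝ e x = 0) :
    (ℝ ∙ e)ᗮ.reflection x = x :=
  Submodule.reflection_mem_subspace_eq_self
    (Submodule.mem_orthogonal_singleton_iff_inner_right.mpr hx)

theorem exists_reflection_orthogonal_singleton_eq {x y : E} (hne : x ≠ y) (hxy : ‖x‖ = ‖y‖) :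
    ∃ e : E, ‖e‖ = 1 ∧ 0 ≤ inner ℝ e x ∧ (ℝ ∙ e)ᗮ.reflection x = y := by
  have hpos : 0 < ‖x - y‖ := norm_sub_pos_iff.mpr hne
  refine ⟨‖x - y‖⁻¹ • (x - y), ?_, ?_, ?_⟩
  · rw [norm_smul, norm_inv, norm_norm, inv_mul_cancel₀ hpos.ne']
  · have hle : inner ℝ y x ≤ ‖x‖ ^ 2 := by simpa [← hxy, sq] using real_inner_le_norm y x
    rw [inner_smul_left, inner_sub_left, real_inner_self_eq_norm_sq]
    exact mul_nonneg (inv_nonneg.mpr hpos.le) (sub_nonneg.mpr hle)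
  · have hspan : (ℝ ∙ (‖x - y‖⁻¹ • (x - y))) = ℝ ∙ (x - y) :=
      Submodule.span_singleton_smul_eq (inv_pos.mpr hpos).ne'.isUnit _
    convert Submodule.reflection_sub hxy using 4

theorem fderiv_apply_le_of_sub_add_smul_neg_le {w : E → ℝ} {p v : E}
    (hw : DifferentiableAt ℝ w p) {C : ℝ}
    (hle : ∀ᶠ t in 𝓝[>] (0 : ℝ), w (p + t • v) - w (p + t • -v) ≤ 2 * C * t) :
    fderiv ℝ w p v ≤ C := by
  have hderiv : HasDerivAt (fun t : ℝ => w (p + t • v) - w (p + t • -v))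
      (2 * fderiv ℝ w p v) 0 := by
    refine ((hw.hasFDerivAt.hasLineDerivAt v).sub
      (hw.hasFDerivAt.hasLineDerivAt (-v))).congr_deriv ?_
    rw [map_neg]
    ring
  have hslope : 2 * fderiv ℝ w p v ≤ 2 * C := by
    refine le_of_tendsto hderiv.tendsto_slope_zero_right ?_
    filter_upwards [hle, self_mem_nhdsWithin] with t hle (ht : 0 < t)
    simpa [inv_mul_le_iff₀ ht, mul_comm t] using hle
  linarith

/-- The closed half of the ball of radius `R` about the origin on which `⟪e, ·⟫ ≥ 0`. -/
def closedHalfBall (e : E) (R : ℝ) : Set E := {x | ‖x‖ ≤ R ∧ 0 ≤ inner ℝ e x}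

/-- A harmonic function on the half ball `closedHalfBall e R` (for a unit vector `e`) which is
nonnegative, and at least `M` on the spherical part of the boundary. -/
noncomputable def halfBallBarrier (e : E) (R M : ℝ) (x : E) : ℝ :=
  M / R ^ 2 * (‖x‖ ^ 2 + Module.finrank ℝ E * (inner ℝ e x * (R - inner ℝ e x)))

theorem contDiff_inner_mul_sub {n : WithTop ℕ∞} (e : E) (R : ℝ) :
    ContDiff ℝ n fun x : E => inner ℝ e x * (R - inner ℝ e x) :=
  have hinner : ContDiff ℝ n fun x : E => inner ℝ e x := contDiff_const.inner ℝ contDiff_id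
  hinner.mul (contDiff_const.sub hinner)

theorem contDiff_halfBallBarrier {n : WithTop ℕ∞} (e : E) (R M : ℝ) :
    ContDiff ℝ n (halfBallBarrier e R M) :=
  contDiff_const.mul ((contDiff_norm_sq ℝ).add (contDiff_const.mul (contDiff_inner_mul_sub e R)))

theorem inner_mem_Icc_of_mem_closedHalfBall {e : E} (he : ‖e‖ = 1) {R : ℝ} {x : E}
    (hx : x ∈ closedHalfBall e R) : inner ℝ e x ∈ Icc 0 R :=
  ⟨hx.2, (real_inner_le_norm e x).trans (by simpa [he] using hx.1)⟩

theorem inner_mul_sub_nonneg_of_mem_closedHalfBall {e : E} (he : ‖e‖ = 1) {R : ℝ} {x : E}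
    (hx : x ∈ closedHalfBall e R) : 0 ≤ inner ℝ e x * (R - inner ℝ e x) :=
  have hmem := inner_mem_Icc_of_mem_closedHalfBall he hx
  mul_nonneg hmem.1 (sub_nonneg.mpr hmem.2)

theorem halfBallBarrier_nonneg {e : E} (he : ‖e‖ = 1) {R M : ℝ} (hM : 0 ≤ M) {x : E}
    (hx : x ∈ closedHalfBall e R) : 0 ≤ halfBallBarrier e R M x := by
  have := inner_mul_sub_nonneg_of_mem_closedHalfBall he hx
  unfold halfBallBarrier
  positivity

theorem le_halfBallBarrier_of_norm_eq {e : E} (he : ‖e‖ = 1) {R M : ℝ} (hR : 0 < R) (hM : 0 ≤ M)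
    {x : E} (hx : x ∈ closedHalfBall e R) (hxR : ‖x‖ = R) : M ≤ halfBallBarrier e R M x := by
  have hinner := inner_mul_sub_nonneg_of_mem_closedHalfBall he hx
  calc M = M / R ^ 2 * R ^ 2 := by field_simp
    _ ≤ halfBallBarrier e R M x := by
      rw [halfBallBarrier, hxR]
      gcongr
      exact le_add_of_nonneg_right (by positivity)

theorem isCompact_closedHalfBall [FiniteDimensional ℝ E] (e : E) (R : ℝ) :
    IsCompact (closedHalfBall e R) :=
  have hinner : Continuous fun x : E => inner ℝ e x := continuous_const.inner continuous_id
  (isCompact_closedBall 0 R).of_isClosed_subset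
    (IsClosed.inter (isClosed_le continuous_norm continuous_const)
      (isClosed_le continuous_const hinner))
    fun _ hx => mem_closedBall_zero_iff.mpr hx.1

theorem halfBallBarrier_le {e : E} (he : ‖e‖ = 1) {R M : ℝ} (hR : 0 < R) (hM : 0 ≤ M)
    {x : E} (hx : x ∈ closedHalfBall e R) :
    halfBallBarrier e R M x ≤ (Module.finrank ℝ E + 1) * M / R * ‖x‖ := by
  have hinner := inner_mem_Icc_of_mem_closedHalfBall he hx
  have hle : inner ℝ e x ≤ ‖x‖ := by simpa [he] using real_inner_le_norm e x
  calc halfBallBarrier e R M x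
      ≤ M / R ^ 2 * (‖x‖ * R + Module.finrank ℝ E * (‖x‖ * R)) := by
        rw [halfBallBarrier, sq ‖x‖]
        gcongr
        · exact hx.1
        · exact sub_nonneg.mpr hinner.2
        · exact sub_le_self R hinner.1
    _ = (Module.finrank ℝ E + 1) * M / R * ‖x‖ := by field_simp; ring

variable [FiniteDimensional ℝ E]

theorem laplacian_halfBallBarrier {e : E} (he : ‖e‖ = 1) (R M : ℝ) (x : E) :
    Δ (halfBallBarrier e R M) x = 0 := by
  have hsq : Δ (fun y : E => ‖y‖ ^ 2) x = 2 * Module.finrank ℝ E := by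
    simpa using laplacian_comp_norm_sq (φ := fun t => t) (x := x) contDiffAt_id
  have hinner : Δ (fun y : E => inner ℝ e y * (R - inner ℝ e y)) x = -2 := by
    rw [laplacian_comp_inner (φ := fun t => t * (R - t)) (by fun_prop), deriv_deriv_mul_sub, he]
    norm_num
  have hsq₂ : ContDiffAt ℝ 2 (fun y : E => ‖y‖ ^ 2) x := (contDiff_norm_sq ℝ).contDiffAt
  have hinner₂ : ContDiffAt ℝ 2 ((Module.finrank ℝ E : ℝ) •
      fun y : E => inner ℝ e y * (R - inner ℝ e y)) x :=
    contDiffAt_const.smul (contDiff_inner_mul_sub e R).contDiffAt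
  change Δ ((M / R ^ 2) • ((fun y : E => ‖y‖ ^ 2) +
    (Module.finrank ℝ E : ℝ) • fun y : E => inner ℝ e y * (R - inner ℝ e y))) x = 0
  have hsum₂ : ContDiffAt ℝ 2 ((fun y : E => ‖y‖ ^ 2) +
      (Module.finrank ℝ E : ℝ) • fun y : E => inner ℝ e y * (R - inner ℝ e y)) x :=
    hsq₂.add hinner₂
  rw [laplacian_smul _ hsum₂, hsq₂.laplacian_add hinner₂,
    laplacian_smul _ (contDiff_inner_mul_sub e R).contDiffAt, hsq, hinner]
  simp only [smul_eq_mul]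
  ring

theorem le_halfBallBarrier_add {e : E} (he : ‖e‖ = 1) {R M : ℝ} (hR : 0 < R) (hM : 0 ≤ M)
    {v b : E → ℝ} (hv : ContinuousOn v (closedHalfBall e R))
    (hb : ContinuousOn b (closedHalfBall e R))
    (hv₂ : ∀ x, ‖x‖ < R → 0 < inner ℝ e x → ContDiffAt ℝ 2 v x)
    (hb₂ : ∀ x, ‖x‖ < R → 0 < inner ℝ e x → ContDiffAt ℝ 2 b x)
    (hΔ : ∀ x, ‖x‖ < R → 0 < inner ℝ e x → Δ b x < Δ v x)
    (hv_flat : ∀ x ∈ closedHalfBall e R, inner ℝ e x = 0 → v x ≤ 0)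
    (hvM : ∀ x ∈ closedHalfBall e R, v x ≤ M) (hb_nonneg : ∀ x ∈ closedHalfBall e R, 0 ≤ b x)
    {x : E} (hx : x ∈ closedHalfBall e R) : v x ≤ halfBallBarrier e R M x + b x := by
  have hinner : Continuous fun y : E => inner ℝ e y := continuous_const.inner continuous_id
  have hopen : IsOpen {y : E | ‖y‖ < R ∧ 0 < inner ℝ e y} :=
    (isOpen_lt continuous_norm continuous_const).and (isOpen_lt continuous_const hinner)
  have hsub : {y : E | ‖y‖ < R ∧ 0 < inner ℝ e y} ⊆ closedHalfBall e R :=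
    fun y hy => ⟨hy.1.le, hy.2.le⟩
  have hbarrier (n : WithTop ℕ∞) := contDiff_halfBallBarrier (n := n) e R M
  refine le_of_laplacian_lt (isCompact_closedHalfBall e R) hopen hsub hv
    ((hbarrier 0).continuous.continuousOn.add hb) (fun y hy => hv₂ y hy.1 hy.2)
    (fun y hy => (hbarrier 2).contDiffAt.add (hb₂ y hy.1 hy.2)) (fun y hy => ?_)
    (fun y ⟨hyK, hyU⟩ => ?_) hx
  · have hadd := (hbarrier 2).contDiffAt.laplacian_add (hb₂ y hy.1 hy.2)
    rw [laplacian_halfBallBarrier he, zero_add] at hadd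
    exact hadd.trans_lt (hΔ y hy.1 hy.2)
  · rw [Pi.add_apply]
    obtain hy | hy := hyK.2.eq_or_lt
    · linarith [hv_flat y hyK hy.symm, halfBallBarrier_nonneg he hM hyK, hb_nonneg y hyK]
    · have hyR : ‖y‖ = R := hyK.1.antisymm (not_lt.mp fun hlt => hyU ⟨hlt, hy⟩)
      linarith [hvM y hyK, le_halfBallBarrier_of_norm_eq he hR hM hyK hyR, hb_nonneg y hyK]

theorem sub_reflection_le {e p : E} (he : ‖e‖ = 1) {R M : ℝ} (hR : 0 < R) {w : E → ℝ}
    {φ : ℝ → ℝ} (hw : ContinuousOn w (closedBall p R)) (hwM : ∀ x ∈ closedBall p R, |w x| ≤ M)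
    (hw₂ : ∀ x, ‖x‖ < R → inner ℝ e x ≠ 0 → ContDiffAt ℝ 2 w (p + x))
    (hφ : ContinuousOn φ (Icc 0 R)) (hφ₂ : ∀ t ∈ Ioo 0 R, ContDiffAt ℝ 2 φ t)
    (hφ_nonneg : ∀ t ∈ Icc 0 R, 0 ≤ φ t)
    (hΔ : ∀ x, ‖x‖ < R → inner ℝ e x ≠ 0 →
      deriv (deriv φ) |inner ℝ e x| < -(2 * |Δ w (p + x)|))
    {x : E} (hx : x ∈ closedHalfBall e R) :
    w (p + x) - w (p + (ℝ ∙ e)ᗮ.reflection x) ≤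
      halfBallBarrier e R (2 * M) x + φ (inner ℝ e x) := by
  set σ := (ℝ ∙ e)ᗮ.reflection with hσ
  have hM : 0 ≤ M := (abs_nonneg _).trans (hwM p (mem_closedBall_self hR.le))
  have hinnerσ (y : E) : inner ℝ e (σ y) = -inner ℝ e y :=
    inner_reflection_orthogonal_singleton e y
  have hmem (y : E) (hy : y ∈ closedHalfBall e R) :
      p + y ∈ closedBall p R ∧ p + σ y ∈ closedBall p R := by
    simp [hy.1]
  have hw₂σ (y : E) (hy : ‖y‖ < R) (hpos : 0 < inner ℝ e y) : ContDiffAt ℝ 2 w (p + σ y) :=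
    hw₂ _ (by simpa using hy) (by simpa [hinnerσ] using hpos.ne')
  have hφ_inner (y : E) (hy : ‖y‖ < R) (hpos : 0 < inner ℝ e y) :
      ContDiffAt ℝ 2 φ (inner ℝ e y) :=
    hφ₂ _ ⟨hpos, (real_inner_le_norm e y).trans_lt (by simpa [he] using hy)⟩
  refine le_halfBallBarrier_add he hR (M := 2 * M) (by positivity)
    (v := fun y => w (p + y) - w (p + σ y)) (b := fun y => φ (inner ℝ e y))
    ?_ ?_ (fun y hy hpos => ?_) ?_ ?_ ?_ ?_ ?_ hx
  · exact (hw.comp (by fun_prop) fun y hy => (hmem y hy).1).sub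
      (hw.comp (by fun_prop) fun y hy => (hmem y hy).2)
  · exact hφ.comp (by fun_prop) fun y hy => inner_mem_Icc_of_mem_closedHalfBall he hy
  · exact (contDiffAt_comp_add_linearIsometryEquiv (.refl ℝ E) (hw₂ y hy hpos.ne')).sub
      (contDiffAt_comp_add_linearIsometryEquiv σ (hw₂σ y hy hpos))
  · exact fun y hy hpos => (hφ_inner y hy hpos).comp y (contDiffAt_const.inner ℝ contDiffAt_id)
  · intro y hy hpos
    have hbound := hΔ y hy hpos.ne'
    have hboundσ := hΔ (σ y) (by simpa using hy) (by simpa [hinnerσ] using hpos.ne')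
    rw [hinnerσ, abs_neg] at hboundσ
    rw [abs_of_pos hpos] at hbound hboundσ
    rw [laplacian_comp_inner (hφ_inner y hy hpos), he,
      laplacian_sub_comp_add_linearIsometryEquiv σ (hw₂ y hy hpos.ne') (hw₂σ y hy hpos)]
    linarith [neg_abs_le (Δ w (p + y)), le_abs_self (Δ w (p + σ y))]
  · intro y _ hflat
    rw [hσ, reflection_orthogonal_singleton_of_inner_eq_zero hflat, sub_self]
  · intro y hy
    linarith [abs_le.mp (hwM _ (hmem y hy).1), abs_le.mp (hwM _ (hmem y hy).2)]
  · exact fun y hy => hφ_nonneg _ (inner_mem_Icc_of_mem_closedHalfBall he hy)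

theorem sub_reflection_le_norm_rpow {e : E} (he : ‖e‖ = 1) {R M B ε : ℝ} (hR : 0 < R) (hB : 0 < B)
    (hε : 0 < ε) (hε₁ : ε < 1) {w : E → ℝ} (hw : ContinuousOn w (closedBall 0 R))
    (hwM : ∀ x ∈ closedBall 0 R, |w x| ≤ M)
    (hw₂ : ∀ x, 0 < ‖x‖ → ‖x‖ < R → ContDiffAt ℝ 2 w x)
    (hΔ : ∀ x, 0 < ‖x‖ → ‖x‖ < R → |Δ w x| ≤ B * ‖x‖ ^ (ε - 2))
    {x : E} (hx : x ∈ closedHalfBall e R) :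
    w x - w ((ℝ ∙ e)ᗮ.reflection x) ≤
      (Module.finrank ℝ E + 1) * (2 * M) / R * ‖x‖ + 3 * B / (ε * (1 - ε)) * ‖x‖ ^ ε := by
  have hM : 0 ≤ M := (abs_nonneg _).trans (hwM 0 (mem_closedBall_self hR.le))
  have hε₁' : 0 < 1 - ε := sub_pos.mpr hε₁
  have hinner_le (z : E) : |inner ℝ e z| ≤ ‖z‖ := by simpa [he] using abs_real_inner_le_norm e z
  have hnorm_pos {z : E} (hz : inner ℝ e z ≠ 0) : 0 < ‖z‖ :=
    (abs_pos.mpr hz).trans_le (hinner_le z)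
  set A : ℝ := 3 * B / (ε * (1 - ε)) with hA
  have hφ (z : E) (hzR : ‖z‖ < R) (hz : inner ℝ e z ≠ 0) :
      deriv (deriv fun t => A * t ^ ε) |inner ℝ e z| < -(2 * |Δ w z|) := by
    have hsecond : deriv (deriv fun t => A * t ^ ε) |inner ℝ e z| =
        -(3 * B * |inner ℝ e z| ^ (ε - 2)) := by
      rw [deriv_const_mul_field', deriv_const_mul_field, deriv_deriv_rpow_const, hA]
      field_simp
      ring
    have hlap : |Δ w z| ≤ B * |inner ℝ e z| ^ (ε - 2) :=
      (hΔ z (hnorm_pos hz) hzR).trans (mul_le_mul_of_nonneg_left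
        (rpow_le_rpow_of_nonpos (abs_pos.mpr hz) (hinner_le z) (by linarith)) hB.le)
    linarith [mul_pos hB (rpow_pos_of_pos (abs_pos.mpr hz) (ε - 2))]
  have hbound := sub_reflection_le (p := 0) he hR (φ := fun t => A * t ^ ε) hw hwM
    (fun z hzR hz => by rw [zero_add]; exact hw₂ z (hnorm_pos hz) hzR)
    (ContinuousOn.const_mul (continuousOn_id.rpow_const fun _ _ => .inr hε.le) _)
    (fun t ht => contDiffAt_const.mul (contDiffAt_rpow_const_of_ne ht.1.ne'))
    (fun t ht => mul_nonneg (by positivity) (rpow_nonneg ht.1 ε))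
    (fun z hzR hz => by rw [zero_add]; exact hφ z hzR hz) hx
  rw [zero_add, zero_add] at hbound
  refine hbound.trans (add_le_add (halfBallBarrier_le he hR (by positivity) hx) ?_)
  gcongr
  · exact hx.2
  · exact (le_abs_self _).trans (hinner_le x)

theorem sub_le_of_norm_eq {R M B ε : ℝ} (hR : 0 < R) (hB : 0 < B) (hε : 0 < ε) (hε₁ : ε < 1)
    {w : E → ℝ} (hw : ContinuousOn w (closedBall 0 R)) (hwM : ∀ x ∈ closedBall 0 R, |w x| ≤ M)
    (hw₂ : ∀ x, 0 < ‖x‖ → ‖x‖ < R → ContDiffAt ℝ 2 w x)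
    (hΔ : ∀ x, 0 < ‖x‖ → ‖x‖ < R → |Δ w x| ≤ B * ‖x‖ ^ (ε - 2))
    {x y : E} (hxR : ‖x‖ ≤ R) (hxy : ‖x‖ = ‖y‖) :
    w x - w y ≤ (Module.finrank ℝ E + 1) * (2 * M) / R * ‖x‖ + 3 * B / (ε * (1 - ε)) * ‖x‖ ^ ε := by
  obtain rfl | hne := eq_or_ne x y
  · have hM : 0 ≤ M := (abs_nonneg _).trans (hwM 0 (mem_closedBall_self hR.le))
    have : 0 < 1 - ε := sub_pos.mpr hε₁
    rw [sub_self]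
    positivity
  · obtain ⟨e, he, hxe, rfl⟩ := exists_reflection_orthogonal_singleton_eq hne hxy
    exact sub_reflection_le_norm_rpow he hR hB hε hε₁ hw hwM hw₂ hΔ ⟨hxR, hxe⟩

theorem sub_add_smul_neg_le {e p : E} (he : ‖e‖ = 1) {R M B : ℝ} (hR : 0 < R) (hB : 0 < B)
    {w : E → ℝ} (hw : ContinuousOn w (closedBall p R)) (hwM : ∀ x ∈ closedBall p R, |w x| ≤ M)
    (hw₂ : ∀ x ∈ ball p R, ContDiffAt ℝ 2 w x) (hΔ : ∀ x ∈ ball p R, |Δ w x| ≤ B)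
    {t : ℝ} (ht : t ∈ Ioc 0 R) :
    w (p + t • e) - w (p + t • -e) ≤
      2 * ((Module.finrank ℝ E + 1) * M / R + 3 / 4 * B * R) * t := by
  have hM : 0 ≤ M := (abs_nonneg _).trans (hwM p (mem_closedBall_self hR.le))
  have hte : inner ℝ e (t • e) = t := by simp [inner_smul_right, he]
  have hnorm : ‖t • e‖ = t := by rw [norm_smul, he, mul_one, norm_of_nonneg ht.1.le]
  have hmem : t • e ∈ closedHalfBall e R := ⟨hnorm.trans_le ht.2, hte.symm ▸ ht.1.le⟩
  have hreflection : (ℝ ∙ e)ᗮ.reflection (t • e) = t • -e := by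
    rw [map_smul, Submodule.reflection_orthogonalComplement_singleton_eq_neg]
  have hbound := sub_reflection_le he hR (φ := fun t => 3 * B / 2 * (t * (R - t))) hw hwM
    (fun z hz _ => hw₂ _ (by simpa using hz)) (by fun_prop) (fun t _ => by fun_prop)
    (fun t ht => mul_nonneg (by positivity) (mul_nonneg ht.1 (sub_nonneg.mpr ht.2)))
    (fun z hz _ => by
      rw [deriv_const_mul_field', deriv_const_mul_field, deriv_deriv_mul_sub]
      linarith [hΔ (p + z) (by simpa using hz)]) hmem
  have hbarrier := halfBallBarrier_le he hR (M := 2 * M) (by positivity) hmem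
  rw [hreflection, hte] at hbound
  rw [hnorm] at hbarrier
  have hprofile : 3 * B / 2 * (t * (R - t)) ≤ 3 / 2 * B * R * t := by
    nlinarith [mul_pos hB (sq_pos_of_pos ht.1)]
  linear_combination hbound + hbarrier + hprofile

theorem norm_fderiv_le_of_abs_laplacian_le {p : E} {R M B : ℝ} (hR : 0 < R) (hB : 0 < B)
    {w : E → ℝ} (hw : ContinuousOn w (closedBall p R)) (hwM : ∀ x ∈ closedBall p R, |w x| ≤ M)
    (hw₂ : ∀ x ∈ ball p R, ContDiffAt ℝ 2 w x) (hΔ : ∀ x ∈ ball p R, |Δ w x| ≤ B) :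
    ‖fderiv ℝ w p‖ ≤ (Module.finrank ℝ E + 1) * M / R + 3 / 4 * B * R := by
  have hM : 0 ≤ M := (abs_nonneg _).trans (hwM p (mem_closedBall_self hR.le))
  have hdiff : DifferentiableAt ℝ w p :=
    (hw₂ p (mem_ball_self hR)).differentiableAt (by simp)
  have hunit (e : E) (he : ‖e‖ = 1) :
      fderiv ℝ w p e ≤ (Module.finrank ℝ E + 1) * M / R + 3 / 4 * B * R :=
    fderiv_apply_le_of_sub_add_smul_neg_le hdiff <| by
      filter_upwards [Ioc_mem_nhdsGT hR] with t ht
        using sub_add_smul_neg_le he hR hB hw hwM hw₂ hΔ ht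
  refine ContinuousLinearMap.opNorm_le_of_unit_norm (by positivity) fun e he => abs_le.mpr ⟨?_, ?_⟩
  · simpa [neg_le] using hunit (-e) (by rwa [norm_neg])
  · exact hunit e he

end Reflection

section IsolatedSingularity

variable {E : Type*} [NormedAddCommGroup E]

theorem exists_pos_of_eventually_nhdsNE_zero {P : E → Prop} (h : ∀ᶠ x in 𝓝[≠] 0, P x) :
    ∃ R > 0, ∀ x, 0 < ‖x‖ → ‖x‖ < R → P x := by
  obtain ⟨R, hR, hP⟩ := Metric.eventually_nhds_iff_ball.mp (eventually_nhdsWithin_iff.mp h)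
  exact ⟨R, hR, fun x hx hxR => hP x (mem_ball_zero_iff.mpr hxR) (norm_pos_iff.mp hx)⟩

theorem isBigO_norm_rpow_of_le {s t : ℝ} (hst : s ≤ t) :
    (fun x : E => ‖x‖ ^ t) =O[𝓝[≠] 0] fun x => ‖x‖ ^ s := by
  refine .of_bound' ?_
  filter_upwards [self_mem_nhdsWithin, nhdsWithin_le_nhds (ball_mem_nhds 0 one_pos)] with x hx hx₁
  rw [norm_of_nonneg (by positivity), norm_of_nonneg (by positivity)]
  exact rpow_le_rpow_of_exponent_ge (norm_pos_iff.mpr hx) (mem_ball_zero_iff.mp hx₁).le hst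

theorem tendsto_norm_rpow_neg_mul_of_isBigO {f : E → ℝ} {δ ε : ℝ} (hδ : δ < ε)
    (hf : f =O[𝓝[≠] 0] fun x => ‖x‖ ^ ε) :
    Tendsto (fun x => ‖x‖ ^ (-δ) * f x) (𝓝[≠] 0) (𝓝 0) := by
  have hlim : Tendsto (fun x : E => ‖x‖ ^ (ε - δ)) (𝓝[≠] 0) (𝓝 0) :=
    ((continuous_norm.rpow_const fun _ => .inr (sub_pos.mpr hδ).le).tendsto' 0 _
      (by simp [(sub_pos.mpr hδ).ne'])).mono_left nhdsWithin_le_nhds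
  refine (((isBigO_refl (fun x : E => ‖x‖ ^ (-δ)) _).mul hf).congr' .rfl ?_).trans_tendsto hlim
  filter_upwards [self_mem_nhdsWithin] with x hx
  rw [← rpow_add (norm_pos_iff.mpr hx), neg_add_eq_sub]

theorem rpow_le_two_rpow_abs_mul_rpow {a b : ℝ} (hb : 0 < b) (hle : b / 2 ≤ a) (hle' : a ≤ 2 * b)
    (s : ℝ) : a ^ s ≤ 2 ^ |s| * b ^ s := by
  obtain hs | hs := le_total 0 s
  · rw [abs_of_nonneg hs, ← mul_rpow two_pos.le hb.le]
    gcongr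
    linarith
  · calc a ^ s ≤ (b / 2) ^ s := rpow_le_rpow_of_nonpos (by positivity) hle hs
      _ = 2 ^ |s| * b ^ s := by
        rw [abs_of_nonpos hs, rpow_neg two_pos.le, div_rpow hb.le two_pos.le, div_eq_inv_mul]

variable [InnerProductSpace ℝ E] [FiniteDimensional ℝ E]

theorem le_sub_mul_div_rpow (hE : 2 ≤ Module.finrank ℝ E) {r k δ : ℝ} (hr : 0 < r) (hδ : 0 < δ)
    {f : E → ℝ} (hf : ContinuousOn f (closedBall 0 r))
    (hf₂ : ∀ x, 0 < ‖x‖ → ‖x‖ < r → ContDiffAt ℝ 2 f x)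
    (hΔ : ∀ x, 0 < ‖x‖ → ‖x‖ < r → 0 < Δ f x) (hle : ∀ x, ‖x‖ = r → f x ≤ k) (hk : k ≤ f 0)
    {x : E} (hx : x ∈ closedBall 0 r) : f x ≤ f 0 - (f 0 - k) * (‖x‖ / r) ^ δ := by
  have hE' : (2 : ℝ) ≤ Module.finrank ℝ E := by exact_mod_cast hE
  have hopen : IsOpen {y : E | 0 < ‖y‖ ∧ ‖y‖ < r} :=
    (isOpen_lt continuous_const continuous_norm).and (isOpen_lt continuous_norm continuous_const)
  have hscale : (fun y : E => f 0 - (f 0 - k) * (‖y‖ / r) ^ δ) =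
      (fun _ => f 0) + (-((f 0 - k) / r ^ δ)) • fun y => ‖y‖ ^ δ := by
    ext y
    simp only [Pi.add_apply, Pi.smul_apply, smul_eq_mul, div_rpow (norm_nonneg y) hr.le]
    ring
  have hsmul {y : E} (hy : 0 < ‖y‖) :
      ContDiffAt ℝ 2 ((-((f 0 - k) / r ^ δ)) • fun y : E => ‖y‖ ^ δ) y :=
    contDiffAt_const.smul (contDiffAt_norm_rpow δ (norm_pos_iff.mp hy))
  refine le_of_laplacian_lt (isCompact_closedBall 0 r) hopen
    (g := fun y => f 0 - (f 0 - k) * (‖y‖ / r) ^ δ)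
    (fun y hy => mem_closedBall_zero_iff.mpr hy.2.le) hf ?_ (fun y hy => hf₂ y hy.1 hy.2)
    (fun y hy => ?_) (fun y hy => ?_) (fun y hy => ?_) hx
  · exact (continuous_const.sub (continuous_const.mul
      ((continuous_norm.div_const r).rpow_const fun _ => .inr hδ.le))).continuousOn
  · rw [hscale]
    exact contDiffAt_const.add (hsmul hy.1)
  · refine lt_of_le_of_lt ?_ (hΔ y hy.1 hy.2)
    rw [hscale, contDiffAt_const.laplacian_add (hsmul hy.1),
      laplacian_smul _ (contDiffAt_norm_rpow δ (norm_pos_iff.mp hy.1)),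
      laplacian_norm_rpow δ (norm_pos_iff.mp hy.1)]
    have : 0 ≤ (f 0 - k) / r ^ δ * (δ * (δ + Module.finrank ℝ E - 2) * ‖y‖ ^ (δ - 2)) :=
      mul_nonneg (div_nonneg (by linarith) (by positivity))
        (mul_nonneg (mul_nonneg hδ.le (by linarith)) (by positivity))
    simpa [laplacian_const] using this
  · obtain hy₀ | hy₀ := (norm_nonneg y).eq_or_lt
    · simp [norm_eq_zero.mp hy₀.symm, zero_rpow hδ.ne']
    · have hyr : ‖y‖ = r :=
        (mem_closedBall_zero_iff.mp hy.1).antisymm (not_lt.mp fun hlt => hy.2 ⟨hy₀, hlt⟩)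
      simpa [hyr, div_self hr.ne'] using hle y hyr

theorem apply_zero_le_of_forall_norm_eq_le (hE : 2 ≤ Module.finrank ℝ E) {r k : ℝ} (hr : 0 < r)
    {f : E → ℝ} (hf : ContinuousOn f (closedBall 0 r))
    (hf₂ : ∀ x, 0 < ‖x‖ → ‖x‖ < r → ContDiffAt ℝ 2 f x)
    (hΔ : ∀ x, 0 < ‖x‖ → ‖x‖ < r → 0 < Δ f x) (hle : ∀ x, ‖x‖ = r → f x ≤ k) : f 0 ≤ k := by
  by_contra! hk
  have : Nontrivial E := Module.nontrivial_of_finrank_pos (R := ℝ) (by omega)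
  have hball : closedBall (0 : E) r ∈ 𝓝 0 := closedBall_mem_nhds 0 hr
  have hfk : ∀ᶠ x in 𝓝[≠] (0 : E), f x ≤ k := by
    filter_upwards [self_mem_nhdsWithin, nhdsWithin_le_nhds hball] with x hx hxr
    have hbase : ‖x‖ / r ≠ 0 := div_ne_zero (norm_ne_zero_iff.mpr hx) hr.ne'
    have hlim : Tendsto (fun δ : ℝ => f 0 - (f 0 - k) * (‖x‖ / r) ^ δ) (𝓝[>] 0) (𝓝 k) := by
      have hcont : Continuous fun δ : ℝ => f 0 - (f 0 - k) * (‖x‖ / r) ^ δ :=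
        continuous_const.sub (continuous_const.mul (continuous_const_rpow hbase))
      exact tendsto_nhdsWithin_of_tendsto_nhds (hcont.tendsto' _ _ (by simp))
    refine ge_of_tendsto hlim ?_
    filter_upwards [self_mem_nhdsWithin] with δ hδ
      using le_sub_mul_div_rpow hE hr hδ hf hf₂ hΔ hle hk.le hxr
  have hcont : Tendsto f (𝓝[≠] 0) (𝓝 (f 0)) :=
    tendsto_nhdsWithin_of_tendsto_nhds (hf.continuousAt hball)
  exact hk.not_ge (le_of_tendsto hcont hfk)

theorem apply_zero_sub_le (hE : 2 ≤ Module.finrank ℝ E) {R M B ε : ℝ} (hR : 0 < R) (hB : 0 < B)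
    (hε : 0 < ε) (hε₁ : ε < 1) {w : E → ℝ} (hw : ContinuousOn w (closedBall 0 R))
    (hwM : ∀ x ∈ closedBall 0 R, |w x| ≤ M)
    (hw₂ : ∀ x, 0 < ‖x‖ → ‖x‖ < R → ContDiffAt ℝ 2 w x)
    (hΔ : ∀ x, 0 < ‖x‖ → ‖x‖ < R → |Δ w x| ≤ B * ‖x‖ ^ (ε - 2))
    {x : E} (hx : 0 < ‖x‖) (hxR : ‖x‖ ≤ R) :
    w 0 - w x ≤ (Module.finrank ℝ E + 1) * (2 * M) / R * ‖x‖ +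
      (3 * B / (ε * (1 - ε)) + 2 * B / ε ^ 2) * ‖x‖ ^ ε := by
  have hE' : (2 : ℝ) ≤ Module.finrank ℝ E := by exact_mod_cast hE
  have hpower₂ {y : E} (hy : 0 < ‖y‖) :
      ContDiffAt ℝ 2 ((2 * B / ε ^ 2) • fun y : E => ‖y‖ ^ ε) y :=
    contDiffAt_const.smul (contDiffAt_norm_rpow ε (norm_pos_iff.mp hy))
  have hpower : Continuous ((2 * B / ε ^ 2) • fun y : E => ‖y‖ ^ ε) :=
    (continuous_norm.rpow_const fun _ => .inr hε.le).const_smul _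
  have hcentre := apply_zero_le_of_forall_norm_eq_le hE hx
    (f := w + (2 * B / ε ^ 2) • fun y => ‖y‖ ^ ε)
    (k := w x + ((Module.finrank ℝ E + 1) * (2 * M) / R * ‖x‖ + 3 * B / (ε * (1 - ε)) * ‖x‖ ^ ε) +
      2 * B / ε ^ 2 * ‖x‖ ^ ε)
    ((hw.mono (closedBall_subset_closedBall hxR)).add hpower.continuousOn)
    (fun y hy hyx => (hw₂ y hy (hyx.trans_le hxR)).add (hpower₂ hy)) (fun y hy hyx => ?_)
    (fun y hyx => ?_)
  · simp only [Pi.add_apply, Pi.smul_apply, smul_eq_mul, norm_zero, zero_rpow hε.ne', mul_zero,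
      add_zero] at hcentre
    linarith
  · have hlap : 2 * B * ‖y‖ ^ (ε - 2) ≤
        2 * B / ε ^ 2 * (ε * (ε + Module.finrank ℝ E - 2) * ‖y‖ ^ (ε - 2)) :=
      calc 2 * B * ‖y‖ ^ (ε - 2) = 2 * B / ε ^ 2 * (ε * ε * ‖y‖ ^ (ε - 2)) := by field_simp
        _ ≤ _ := by gcongr; linarith
    rw [(hw₂ y hy (hyx.trans_le hxR)).laplacian_add (hpower₂ hy),
      laplacian_smul _ (contDiffAt_norm_rpow ε (norm_pos_iff.mp hy)),
      laplacian_norm_rpow ε (norm_pos_iff.mp hy), smul_eq_mul]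
    linarith [(abs_le.mp (hΔ y hy (hyx.trans_le hxR))).1, mul_pos hB (rpow_pos_of_pos hy (ε - 2))]
  · have := sub_le_of_norm_eq hR hB hε hε₁ hw hwM hw₂ hΔ (hyx.trans_le hxR) hyx
    simp only [Pi.add_apply, Pi.smul_apply, smul_eq_mul, hyx] at this ⊢
    linarith

theorem isBigO_sub_apply_zero_of_laplacian_isBigO (hE : 2 ≤ Module.finrank ℝ E) {ε : ℝ}
    (hε : 0 < ε) (hε₁ : ε < 1) {w : E → ℝ} (hw : ContinuousAt w 0)
    (hw₂ : ∀ᶠ x in 𝓝[≠] 0, ContDiffAt ℝ 2 w x)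
    (hΔ : Δ w =O[𝓝[≠] 0] fun x => ‖x‖ ^ (ε - 2)) :
    (fun x => w x - w 0) =O[𝓝[≠] 0] fun x => ‖x‖ ^ ε := by
  obtain ⟨B, hB, hΔB⟩ := hΔ.exists_pos
  obtain ⟨R₀, hR₀, hR₀w⟩ := exists_pos_of_eventually_nhdsNE_zero (hw₂.and hΔB.bound)
  have hR : 0 < R₀ / 2 := half_pos hR₀
  have hw₂R (x : E) (hx : 0 < ‖x‖) (hxR : ‖x‖ < R₀ / 2) : ContDiffAt ℝ 2 w x :=
    (hR₀w x hx (by linarith)).1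
  have hΔR (x : E) (hx : 0 < ‖x‖) (hxR : ‖x‖ < R₀ / 2) : |Δ w x| ≤ B * ‖x‖ ^ (ε - 2) := by
    simpa [norm_of_nonneg (rpow_nonneg (norm_nonneg x) _)] using (hR₀w x hx (by linarith)).2
  have hcont : ContinuousOn w (closedBall 0 (R₀ / 2)) := fun x hx => by
    obtain rfl | hx₀ := eq_or_ne x 0
    · exact hw.continuousWithinAt
    · exact (hR₀w x (norm_pos_iff.mpr hx₀) (by linarith [mem_closedBall_zero_iff.mp hx])).1
        |>.continuousAt.continuousWithinAt
  obtain ⟨M, hM⟩ := (isCompact_closedBall (0 : E) (R₀ / 2)).exists_bound_of_continuousOn hcont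
  have hbound : (fun x => w x - w 0) =O[𝓝[≠] 0] fun x =>
      (Module.finrank ℝ E + 1) * (2 * M) / (R₀ / 2) * ‖x‖ ^ (1 : ℝ) +
        (3 * B / (ε * (1 - ε)) + 2 * B / ε ^ 2) * ‖x‖ ^ ε := by
    refine .of_norm_eventuallyLE ?_
    filter_upwards [self_mem_nhdsWithin, nhdsWithin_le_nhds (closedBall_mem_nhds 0 hR)]
      with x hx hxR
    have hx := norm_pos_iff.mpr hx
    have hxR := mem_closedBall_zero_iff.mp hxR
    have hlower := apply_zero_sub_le hE hR hB hε hε₁ hcont hM hw₂R hΔR hx hxR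
    have hupper := apply_zero_sub_le hE hR hB hε hε₁ (w := -w) hcont.neg (by simpa using hM)
      (fun y hy hyR => (hw₂R y hy hyR).neg) (by simpa [laplacian_neg] using hΔR) hx hxR
    rw [Pi.neg_apply, Pi.neg_apply] at hupper
    rw [rpow_one]
    exact abs_le.mpr ⟨by linarith, by linarith⟩
  exact hbound.trans (((isBigO_norm_rpow_of_le hε₁.le).const_mul_left _).add
    ((isBigO_refl _ _).const_mul_left _))

theorem isBigO_sub_of_laplacian_isBigO (hE : 2 ≤ Module.finrank ℝ E) {ε c : ℝ} (hε : 0 < ε)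
    (hε₁ : ε < 1) {w : E → ℝ} (hw : Tendsto w (𝓝[≠] 0) (𝓝 c))
    (hw₂ : ∀ᶠ x in 𝓝[≠] 0, ContDiffAt ℝ 2 w x)
    (hΔ : Δ w =O[𝓝[≠] 0] fun x => ‖x‖ ^ (ε - 2)) :
    (fun x => w x - c) =O[𝓝[≠] 0] fun x => ‖x‖ ^ ε := by
  classical
  set W := Function.update w 0 c
  have hWw {x : E} (hx : x ≠ 0) : W =ᶠ[𝓝 x] w := by
    filter_upwards [isOpen_compl_singleton.mem_nhds hx] with y hy using Function.update_of_ne hy _ _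
  have hW₂ : ∀ᶠ x in 𝓝[≠] 0, ContDiffAt ℝ 2 W x := by
    filter_upwards [hw₂, self_mem_nhdsWithin] with x hx₂ hx
      using hx₂.congr_of_eventuallyEq (hWw hx)
  have hWΔ : Δ W =O[𝓝[≠] 0] fun x => ‖x‖ ^ (ε - 2) := by
    refine hΔ.congr' ?_ .rfl
    filter_upwards [self_mem_nhdsWithin] with x hx
      using (laplacian_congr_nhds (hWw hx)).self_of_nhds.symm
  refine (isBigO_sub_apply_zero_of_laplacian_isBigO hE hε hε₁ (continuousAt_update_same.mpr hw)
    hW₂ hWΔ).congr' ?_ .rfl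
  filter_upwards [self_mem_nhdsWithin] with x hx
  exact congrArg₂ _ (hWw hx).self_of_nhds (Function.update_self ..)

theorem norm_fderiv_le_norm_rpow {R A B s : ℝ} (hA : 0 < A) (hB : 0 < B) {w : E → ℝ}
    (hw₂ : ∀ x, 0 < ‖x‖ → ‖x‖ < R → ContDiffAt ℝ 2 w x)
    (hw : ∀ x, 0 < ‖x‖ → ‖x‖ < R → |w x| ≤ A * ‖x‖ ^ s)
    (hΔ : ∀ x, 0 < ‖x‖ → ‖x‖ < R → |Δ w x| ≤ B * ‖x‖ ^ (s - 2))
    {p : E} (hp : 0 < ‖p‖) (hpR : ‖p‖ < R / 2) :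
    ‖fderiv ℝ w p‖ ≤ ((Module.finrank ℝ E + 1) * (2 * A * 2 ^ |s|) +
      3 / 8 * (B * 2 ^ |s - 2|)) * ‖p‖ ^ (s - 1) := by
  have hcomparable {x : E} (hx : x ∈ closedBall p (‖p‖ / 2)) : ‖p‖ / 2 ≤ ‖x‖ ∧ ‖x‖ ≤ 2 * ‖p‖ := by
    have := abs_le.mp ((abs_norm_sub_norm_le x p).trans (mem_closedBall_iff_norm.mp hx))
    constructor <;> linarith
  have hrpow {x : E} (hx : x ∈ closedBall p (‖p‖ / 2)) (t : ℝ) : ‖x‖ ^ t ≤ 2 ^ |t| * ‖p‖ ^ t :=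
    rpow_le_two_rpow_abs_mul_rpow hp (hcomparable hx).1 (hcomparable hx).2 t
  have hpos {x : E} (hx : x ∈ closedBall p (‖p‖ / 2)) : 0 < ‖x‖ := by
    linarith [(hcomparable hx).1]
  have hlt {x : E} (hx : x ∈ closedBall p (‖p‖ / 2)) : ‖x‖ < R := by
    linarith [(hcomparable hx).2]
  have hball {x : E} (hx : x ∈ ball p (‖p‖ / 2)) := ball_subset_closedBall hx
  have hbound := norm_fderiv_le_of_abs_laplacian_le (p := p) (w := w) (half_pos hp)
    (M := A * (2 ^ |s| * ‖p‖ ^ s)) (B := B * (2 ^ |s - 2| * ‖p‖ ^ (s - 2))) (by positivity)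
    (fun x hx => (hw₂ x (hpos hx) (hlt hx)).continuousAt.continuousWithinAt)
    (fun x hx => (hw x (hpos hx) (hlt hx)).trans (by gcongr; exact hrpow hx s))
    (fun x hx => hw₂ x (hpos (hball hx)) (hlt (hball hx)))
    (fun x hx => (hΔ x (hpos (hball hx)) (hlt (hball hx))).trans
      (by gcongr; exact hrpow (hball hx) (s - 2)))
  have hs : ‖p‖ ^ s = ‖p‖ ^ (s - 1) * ‖p‖ := by rw [← rpow_add_one hp.ne', sub_add_cancel]
  have hs' : ‖p‖ ^ (s - 1) = ‖p‖ ^ (s - 2) * ‖p‖ := by rw [← rpow_add_one hp.ne']; ring_nf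
  refine hbound.trans_eq ?_
  rw [hs, hs']
  field_simp
  ring

theorem isBigO_fderiv_of_laplacian_isBigO {s : ℝ} {w : E → ℝ}
    (hw : w =O[𝓝[≠] 0] fun x => ‖x‖ ^ s) (hw₂ : ∀ᶠ x in 𝓝[≠] 0, ContDiffAt ℝ 2 w x)
    (hΔ : Δ w =O[𝓝[≠] 0] fun x => ‖x‖ ^ (s - 2)) :
    fderiv ℝ w =O[𝓝[≠] 0] fun x => ‖x‖ ^ (s - 1) := by
  obtain ⟨A, hA, hwA⟩ := hw.exists_pos
  obtain ⟨B, hB, hΔB⟩ := hΔ.exists_pos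
  obtain ⟨R, hR, hRw⟩ := exists_pos_of_eventually_nhdsNE_zero (hw₂.and (hwA.bound.and hΔB.bound))
  have hnorm (x : E) (t : ℝ) : ‖‖x‖ ^ t‖ = ‖x‖ ^ t := norm_of_nonneg (by positivity)
  simp only [hnorm, norm_eq_abs] at hRw
  refine .of_bound ((Module.finrank ℝ E + 1) * (2 * A * 2 ^ |s|) + 3 / 8 * (B * 2 ^ |s - 2|)) ?_
  filter_upwards [self_mem_nhdsWithin, nhdsWithin_le_nhds (ball_mem_nhds 0 (half_pos hR))]
    with p hp hpR
  rw [hnorm]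
  exact norm_fderiv_le_norm_rpow hA hB (fun x hx hxR => (hRw x hx hxR).1)
    (fun x hx hxR => (hRw x hx hxR).2.1) (fun x hx hxR => (hRw x hx hxR).2.2)
    (norm_pos_iff.mpr hp) (mem_ball_zero_iff.mp hpR)

theorem isBigO_fderiv_of_tendsto (hE : 2 ≤ Module.finrank ℝ E) {ε c : ℝ} (hε : 0 < ε)
    (hε₁ : ε < 1) {w : E → ℝ} (hw : Tendsto w (𝓝[≠] 0) (𝓝 c))
    (hw₂ : ∀ᶠ x in 𝓝[≠] 0, ContDiffAt ℝ 2 w x)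
    (hΔ : Δ w =O[𝓝[≠] 0] fun x => ‖x‖ ^ (ε - 2)) :
    fderiv ℝ w =O[𝓝[≠] 0] fun x => ‖x‖ ^ (ε - 1) := by
  have hsub₂ : ∀ᶠ x in 𝓝[≠] 0, ContDiffAt ℝ 2 (fun x => w x - c) x :=
    hw₂.mono fun x hx => hx.sub contDiffAt_const
  have hsubΔ : Δ (fun x => w x - c) =ᶠ[𝓝[≠] 0] Δ w := by
    filter_upwards [hw₂] with x hx
    exact (hx.laplacian_sub contDiffAt_const).trans (by simp [laplacian_const])
  have hfderiv : fderiv ℝ (fun x => w x - c) = fderiv ℝ w := by ext1 x; rw [fderiv_sub_const]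
  rw [← hfderiv]
  exact isBigO_fderiv_of_laplacian_isBigO (isBigO_sub_of_laplacian_isBigO hE hε hε₁ hw hw₂ hΔ)
    hsub₂ (hΔ.congr' hsubΔ.symm .rfl)

end IsolatedSingularity

section PuncturedDisc

theorem nhdsWithin_pDisc_zero : 𝓝[PDisc] (0 : ℂ) = 𝓝[≠] 0 := by
  have hball : ball (0 : ℂ) 1 ∈ 𝓝 0 := ball_mem_nhds 0 one_pos
  have hPDisc : PDisc = {0}ᶜ ∩ ball 0 1 := by
    ext z
    simp [PDisc]
  rw [hPDisc, nhdsWithin_inter_of_mem' (nhdsWithin_le_nhds hball)]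

theorem isOpen_pDisc : IsOpen PDisc :=
  (isOpen_lt continuous_const continuous_norm).and (isOpen_lt continuous_norm continuous_const)

theorem eventually_mem_pDisc : ∀ᶠ z in 𝓝[≠] (0 : ℂ), z ∈ PDisc :=
  nhdsWithin_pDisc_zero ▸ self_mem_nhdsWithin

end PuncturedDisc

section CoordinateDerivatives

variable {f : ℂ → ℝ} {z : ℂ}

theorem pdx_eq_fderiv_one (hf : DifferentiableAt ℝ f z) : pdx f z = fderiv ℝ f z 1 := by
  simpa [pdx] using
    DifferentiableAt.deriv_comp_add_smul (t := (0 : ℝ)) (y := (1 : ℂ)) (by simpa using hf)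

theorem pdy_eq_fderiv_I (hf : DifferentiableAt ℝ f z) : pdy f z = fderiv ℝ f z I := by
  simpa [pdy] using
    DifferentiableAt.deriv_comp_add_smul (t := (0 : ℝ)) (y := I) (by simpa using hf)

theorem pdx_pdx_eq_iteratedFDeriv (hf : ContDiffAt ℝ 2 f z) :
    pdx (pdx f) z = iteratedFDeriv ℝ 2 f z ![1, 1] := by
  have hfirst (t : ℝ) : pdx f (z + t) = deriv (fun s : ℝ => f (z + s)) t := by
    simp only [pdx, add_assoc, ← ofReal_add]
    rw [deriv_comp_const_add (f := fun s : ℝ => f (z + s)), add_zero]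
  rw [← deriv_deriv_comp_add_smul hf 1, pdx]
  simp [hfirst]

theorem pdy_pdy_eq_iteratedFDeriv (hf : ContDiffAt ℝ 2 f z) :
    pdy (pdy f) z = iteratedFDeriv ℝ 2 f z ![I, I] := by
  have hfirst (t : ℝ) : pdy f (z + t * I) = deriv (fun s : ℝ => f (z + s * I)) t := by
    simp only [pdy, add_assoc, ← add_mul, ← ofReal_add]
    rw [deriv_comp_const_add (f := fun s : ℝ => f (z + s * I)), add_zero]
  rw [← deriv_deriv_comp_add_smul hf I, pdy]
  simp [hfirst]

theorem lap_eq_laplacian (hf : ContDiffAt ℝ 2 f z) : lap f z = Δ f z := by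
  rw [lap, pdx_pdx_eq_iteratedFDeriv hf, pdy_pdy_eq_iteratedFDeriv hf,
    laplacian_eq_iteratedFDeriv_complexPlane]

theorem norm_mul_pdr (hf : DifferentiableAt ℝ f z) (hz : z ≠ 0) :
    ‖z‖ * pdr f z = fderiv ℝ f z z := by
  have hdecomp : fderiv ℝ f z z = z.re * fderiv ℝ f z 1 + z.im * fderiv ℝ f z I := by
    rw [← smul_eq_mul, ← smul_eq_mul, ← map_smul, ← map_smul, ← map_add]
    simp
  rw [pdr, mul_div_cancel₀ _ (norm_ne_zero_iff.mpr hz), pdx_eq_fderiv_one hf, pdy_eq_fderiv_I hf,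
    hdecomp]

theorem pdθ_eq_fderiv (hf : DifferentiableAt ℝ f z) : pdθ f z = fderiv ℝ f z (I * z) := by
  have hdecomp : I * z = (-z.im) • 1 + z.re • I := by
    apply Complex.ext <;> simp
  rw [pdθ, pdx_eq_fderiv_one hf, pdy_eq_fderiv_I hf, hdecomp, map_add, map_smul, map_smul,
    smul_eq_mul, smul_eq_mul]

theorem norm_fderiv_le_norm_pdx_sub_pdy_mul_I (hf : DifferentiableAt ℝ f z) :
    ‖fderiv ℝ f z‖ ≤ ‖(pdx f z : ℂ) - (pdy f z : ℂ) * I‖ := by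
  refine ContinuousLinearMap.opNorm_le_bound _ (norm_nonneg _) fun v => ?_
  have hre : fderiv ℝ f z v = (((pdx f z : ℂ) - (pdy f z : ℂ) * I) * v).re := by
    have hv : v = v.re • 1 + v.im • I := by simp
    conv_lhs => rw [hv, map_add, map_smul, map_smul, ← pdx_eq_fderiv_one hf, ← pdy_eq_fderiv_I hf]
    simp [mul_comm]
  rw [hre, ← norm_mul]
  exact abs_re_le_norm _

theorem isBigO_fderiv_of_eq_zpow_mul {h : ℂ → ℝ} (hh : DifferentiableOn ℝ h PDisc) {N : ℤ}
    {G : ℂ → ℂ} (hG : ContinuousAt G 0)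
    (hord : ∀ z ∈ PDisc, (pdx h z : ℂ) - (pdy h z : ℂ) * I = z ^ N * G z) :
    fderiv ℝ h =O[𝓝[PDisc] 0] fun z => ‖z‖ ^ (N : ℝ) := by
  rw [nhdsWithin_pDisc_zero]
  have hbound : fderiv ℝ h =O[𝓝[≠] 0] fun z => z ^ N * G z := by
    refine .of_bound' ?_
    filter_upwards [eventually_mem_pDisc] with z hz
    rw [← hord z hz]
    exact norm_fderiv_le_norm_pdx_sub_pdy_mul_I
      ((hh z hz).differentiableAt (isOpen_pDisc.mem_nhds hz))
  have hG₁ : G =O[𝓝[≠] 0] fun _ => (1 : ℝ) := (hG.tendsto.isBigO_one ℝ).mono nhdsWithin_le_nhds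
  refine hbound.trans ((((isBigO_refl (fun z : ℂ => z ^ N) _).norm_right).mul hG₁).congr_right ?_)
  simp

end CoordinateDerivatives

section GermsAtOrigin

theorem hasFDerivAt_log_norm {E : Type*} [NormedAddCommGroup E] [InnerProductSpace ℝ E] {x : E}
    (hx : x ≠ 0) : HasFDerivAt (fun y : E => Real.log ‖y‖) ((‖x‖ ^ 2)⁻¹ • innerSL ℝ x) x := by
  have hlog (y : E) : Real.log ‖y‖ = 1 / 2 * Real.log (‖y‖ ^ 2) := by rw [Real.log_pow]; ring
  have hnorm : ‖x‖ ^ 2 ≠ 0 := pow_ne_zero 2 (norm_ne_zero_iff.mpr hx)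
  simp only [hlog]
  refine ((hasStrictFDerivAt_norm_sq x).hasFDerivAt.log hnorm |>.const_mul (1 / 2)).congr_fderiv ?_
  module

theorem laplacian_log_norm {z : ℂ} (hz : z ≠ 0) : Δ (fun y : ℂ => Real.log ‖y‖) z = 0 :=
  (analyticAt_id.harmonicAt_log_norm hz).2.self_of_nhds

variable {β c : ℝ} {u : ℂ → ℝ}

theorem isBigO_exp_of_tendsto_add_mul_log
    (hu : Tendsto (fun z => u z + β * Real.log ‖z‖) (𝓝[≠] 0) (𝓝 c)) :
    (fun z => Real.exp (u z)) =O[𝓝[≠] 0] fun z => ‖z‖ ^ (-β) := by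
  have hexp : (fun z => Real.exp (u z + β * Real.log ‖z‖)) =O[𝓝[≠] 0] fun _ => (1 : ℝ) :=
    ((Real.continuous_exp.tendsto c).comp hu).isBigO_one ℝ
  refine (hexp.mul (isBigO_refl (fun z : ℂ => ‖z‖ ^ (-β)) _)).congr' ?_ (.of_eq (by simp))
  filter_upwards [self_mem_nhdsWithin] with z hz
  rw [rpow_def_of_pos (norm_pos_iff.mpr hz), ← Real.exp_add]
  ring_nf

theorem isBigO_fderiv_add_mul_log (hu₂ : ∀ᶠ z in 𝓝[≠] 0, ContDiffAt ℝ 2 u z)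
    (hu : Tendsto (fun z => u z + β * Real.log ‖z‖) (𝓝[≠] 0) (𝓝 c)) {ε : ℝ} (hε : 0 < ε)
    (hε₁ : ε < 1) (hΔ : Δ u =O[𝓝[≠] 0] fun z => ‖z‖ ^ (ε - 2)) :
    (fun z => fderiv ℝ u z + β • (‖z‖ ^ 2)⁻¹ • innerSL ℝ z) =O[𝓝[≠] 0] fun z => ‖z‖ ^ (ε - 1) := by
  have hlog₂ {z : ℂ} (hz : z ≠ 0) : ContDiffAt ℝ 2 (fun y : ℂ => Real.log ‖y‖) z :=
    (contDiffAt_norm ℝ hz).log (norm_ne_zero_iff.mpr hz)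
  have hsmul₂ {z : ℂ} (hz : z ≠ 0) : ContDiffAt ℝ 2 (β • fun y : ℂ => Real.log ‖y‖) z :=
    contDiffAt_const.smul (hlog₂ hz)
  have hfderiv := isBigO_fderiv_of_tendsto (c := c) (w := u + β • fun y => Real.log ‖y‖)
    Complex.finrank_real_complex.ge hε hε₁ hu ?_ (hΔ.congr' ?_ .rfl)
  · refine hfderiv.congr' ?_ .rfl
    filter_upwards [hu₂, self_mem_nhdsWithin] with z hz₂ hz
    exact ((hz₂.differentiableAt (by simp)).hasFDerivAt.add
      ((hasFDerivAt_log_norm hz).const_smul β)).fderiv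
  · filter_upwards [hu₂, self_mem_nhdsWithin] with z hz₂ hz using hz₂.add (hsmul₂ hz)
  · filter_upwards [hu₂, self_mem_nhdsWithin] with z hz₂ hz
    rw [hz₂.laplacian_add (hsmul₂ hz), laplacian_smul _ (hlog₂ hz), laplacian_log_norm hz,
      smul_zero, add_zero]

theorem isBigO_apply_of_norm_le {L : ℂ → ℂ →L[ℝ] ℝ} {s : ℝ}
    (hL : L =O[𝓝[≠] 0] fun z => ‖z‖ ^ (s - 1)) {v : ℂ → ℂ} (hv : ∀ z, ‖v z‖ ≤ ‖z‖) :
    (fun z => L z (v z)) =O[𝓝[≠] 0] fun z => ‖z‖ ^ s := by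
  have hbound : (fun z => L z (v z)) =O[𝓝[≠] 0] fun z => ‖L z‖ * ‖z‖ :=
    .of_norm_le fun z => ((L z).le_opNorm (v z)).trans (by gcongr; exact hv z)
  refine hbound.trans ((hL.norm_left.mul (isBigO_refl (fun z : ℂ => ‖z‖) _)).congr' .rfl ?_)
  filter_upwards [self_mem_nhdsWithin] with z hz
  rw [← rpow_add_one (norm_ne_zero_iff.mpr hz), sub_add_cancel]

end GermsAtOrigin

section ConnectionForm

variable {a β c ε ν : ℝ} {h u : ℂ → ℝ}

theorem isBigO_exp_smul_fderiv (hexp : (fun z => Real.exp (u z)) =O[𝓝[≠] 0] fun z => ‖z‖ ^ (-β))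
    (hν : fderiv ℝ h =O[𝓝[≠] 0] fun z => ‖z‖ ^ ν) (hε : ε ≤ ν + 1 - β) :
    (fun z => Real.exp (u z) • fderiv ℝ h z) =O[𝓝[≠] 0] fun z => ‖z‖ ^ (ε - 1) := by
  have hsmul := (hexp.smul hν).congr' .rfl (g₂ := fun z : ℂ => ‖z‖ ^ (-β + ν)) <| by
    filter_upwards [self_mem_nhdsWithin] with z hz using (rpow_add (norm_pos_iff.mpr hz) _ _).symm
  exact hsmul.trans (isBigO_norm_rpow_of_le (by linarith))

theorem isBigO_exp_mul_const (hexp : (fun z => Real.exp (u z)) =O[𝓝[≠] 0] fun z => ‖z‖ ^ (-β))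
    (ha : a = 0 ∨ ε ≤ -β) : (fun z => Real.exp (u z) * a) =O[𝓝[≠] 0] fun z => ‖z‖ ^ ε := by
  obtain rfl | hε := ha
  · simpa using isBigO_zero _ _
  · simpa [mul_comm] using (hexp.trans (isBigO_norm_rpow_of_le hε)).const_mul_left a

theorem isBigO_mul_div_norm_sq {k g : ℂ → ℝ} (hk : k =O[𝓝[≠] 0] fun z => ‖z‖ ^ ε)
    (hg : ∀ z, |g z| ≤ ‖z‖) :
    (fun z => k z * g z / ‖z‖ ^ 2) =O[𝓝[≠] 0] fun z => ‖z‖ ^ (ε - 1) := by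
  have hquot : (fun z => g z / ‖z‖ ^ 2) =O[𝓝[≠] 0] fun z => ‖z‖⁻¹ := .of_norm_le fun z => by
    rw [norm_div, norm_pow, norm_norm, inv_eq_one_div, norm_eq_abs]
    obtain hz | hz := (norm_nonneg z).eq_or_lt
    · simp [← hz]
    · rw [div_le_div_iff₀ (by positivity) hz]
      nlinarith [hg z]
  simp only [mul_div_assoc]
  refine (hk.mul hquot).congr' .rfl ?_
  filter_upwards [self_mem_nhdsWithin] with z hz
  rw [rpow_sub_one (norm_ne_zero_iff.mpr hz), div_eq_mul_inv]

theorem isBigO_laplacian_of_lap_eq (hh : DifferentiableOn ℝ h PDisc) (hu : ContDiffOn ℝ 2 u PDisc)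
    (hpde : ∀ z ∈ PDisc, lap u z
      = ((pdx h z + a * z.im / ‖z‖ ^ 2) ^ 2 + (pdy h z - a * z.re / ‖z‖ ^ 2) ^ 2)
        * Real.exp (2 * u z)) (hε : 0 < ε)
    (hdh : (fun z => Real.exp (u z) • fderiv ℝ h z) =O[𝓝[≠] 0] fun z => ‖z‖ ^ (ε - 1))
    (ha : (fun z => Real.exp (u z) * a) =O[𝓝[≠] 0] fun z => ‖z‖ ^ ε) :
    Δ u =O[𝓝[≠] 0] fun z => ‖z‖ ^ (ε - 2) := by
  have hcomponent (v : ℂ) (hv : ‖v‖ = 1) :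
      (fun z => Real.exp (u z) * fderiv ℝ h z v) =O[𝓝[≠] 0] fun z => ‖z‖ ^ (ε - 1) :=
    (IsBigO.of_norm_le fun z => by
      simpa [hv] using (Real.exp (u z) • fderiv ℝ h z).le_opNorm v).trans hdh.norm_left
  have hx := (hcomponent 1 norm_one).add (isBigO_mul_div_norm_sq ha abs_im_le_norm)
  have hy := (hcomponent I norm_I).sub (isBigO_mul_div_norm_sq ha abs_re_le_norm)
  have hsum := (hx.pow 2).add (hy.pow 2)
  refine (hsum.congr' ?_ ?_).trans
    (isBigO_norm_rpow_of_le (s := ε - 2) (t := 2 * ε - 2) (by linarith))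
  · filter_upwards [eventually_mem_pDisc] with z hz
    have hhz := (hh z hz).differentiableAt (isOpen_pDisc.mem_nhds hz)
    rw [← lap_eq_laplacian ((hu z hz).contDiffAt (isOpen_pDisc.mem_nhds hz)), hpde z hz,
      pdx_eq_fderiv_one hhz, pdy_eq_fderiv_I hhz, two_mul, Real.exp_add]
    ring
  · refine .of_eq (funext fun z => ?_)
    rw [← rpow_mul_natCast (norm_nonneg z)]
    ring_nf

theorem isBigO_exp_mul_norm_mul_pdr (hh : DifferentiableOn ℝ h PDisc)
    (hdh : (fun z => Real.exp (u z) • fderiv ℝ h z) =O[𝓝[≠] 0] fun z => ‖z‖ ^ (ε - 1)) :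
    (fun z => Real.exp (u z) * (‖z‖ * pdr h z)) =O[𝓝[≠] 0] fun z => ‖z‖ ^ ε := by
  refine (isBigO_apply_of_norm_le hdh (v := id) fun _ => le_rfl).congr' ?_ .rfl
  filter_upwards [eventually_mem_pDisc, self_mem_nhdsWithin] with z hz hz₀
  rw [norm_mul_pdr ((hh z hz).differentiableAt (isOpen_pDisc.mem_nhds hz)) hz₀]
  simp

theorem isBigO_exp_mul_pdθ_sub (hh : DifferentiableOn ℝ h PDisc)
    (hdh : (fun z => Real.exp (u z) • fderiv ℝ h z) =O[𝓝[≠] 0] fun z => ‖z‖ ^ (ε - 1))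
    (ha : (fun z => Real.exp (u z) * a) =O[𝓝[≠] 0] fun z => ‖z‖ ^ ε) :
    (fun z => Real.exp (u z) * (pdθ h z - a)) =O[𝓝[≠] 0] fun z => ‖z‖ ^ ε := by
  refine ((isBigO_apply_of_norm_le hdh (v := (I * ·)) (by simp)).sub ha).congr' ?_ .rfl
  filter_upwards [eventually_mem_pDisc] with z hz
  rw [pdθ_eq_fderiv ((hh z hz).differentiableAt (isOpen_pDisc.mem_nhds hz)), mul_sub]
  simp

theorem isBigO_norm_mul_pdr_add (hu : DifferentiableOn ℝ u PDisc)
    (hdu : (fun z => fderiv ℝ u z + β • (‖z‖ ^ 2)⁻¹ • innerSL ℝ z) =O[𝓝[≠] 0]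
      fun z => ‖z‖ ^ (ε - 1)) :
    (fun z => ‖z‖ * pdr u z + β) =O[𝓝[≠] 0] fun z => ‖z‖ ^ ε := by
  refine (isBigO_apply_of_norm_le hdu (v := id) fun _ => le_rfl).congr' ?_ .rfl
  filter_upwards [eventually_mem_pDisc, self_mem_nhdsWithin] with z hz hz₀
  have hnorm : ‖z‖ ^ 2 ≠ 0 := pow_ne_zero 2 (norm_ne_zero_iff.mpr hz₀)
  rw [norm_mul_pdr ((hu z hz).differentiableAt (isOpen_pDisc.mem_nhds hz)) hz₀]
  simp [hnorm]

theorem isBigO_pdθ (hu : DifferentiableOn ℝ u PDisc)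
    (hdu : (fun z => fderiv ℝ u z + β • (‖z‖ ^ 2)⁻¹ • innerSL ℝ z) =O[𝓝[≠] 0]
      fun z => ‖z‖ ^ (ε - 1)) :
    pdθ u =O[𝓝[≠] 0] fun z => ‖z‖ ^ ε := by
  refine (isBigO_apply_of_norm_le hdu (v := (I * ·)) (by simp)).congr' ?_ .rfl
  filter_upwards [eventually_mem_pDisc] with z hz
  have horthogonal : inner ℝ z (I * z) = 0 := by simp [Complex.inner, mul_comm]
  rw [pdθ_eq_fderiv ((hu z hz).differentiableAt (isOpen_pDisc.mem_nhds hz))]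
  simp [horthogonal]

theorem isBigO_Mθ_sub (hω11r : (fun z => ‖z‖ * ω11r h u a z - β / 2) =O[𝓝[≠] 0] fun z => ‖z‖ ^ ε)
    (hω11θ : ω11θ h u a =O[𝓝[≠] 0] fun z => ‖z‖ ^ ε)
    (hω22r : (fun z => ‖z‖ * ω22r h u a z - β / 2) =O[𝓝[≠] 0] fun z => ‖z‖ ^ ε)
    (hω22θ : ω22θ h u a =O[𝓝[≠] 0] fun z => ‖z‖ ^ ε) (i j : Fin 2) :
    (fun z => Mθ h u a z i j - ((β / 2) • (!![0, -1; 1, 0] : Matrix (Fin 2) (Fin 2) ℝ)) i j)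
      =O[𝓝[≠] 0] fun z => ‖z‖ ^ ε := by
  fin_cases i <;> fin_cases j
  · simpa [Mθ] using hω11θ
  · refine hω11r.neg_left.congr_left fun z => ?_
    change _ = -‖z‖ * ω11r h u a z - β / 2 * -1
    ring
  · simpa [Mθ] using hω22r
  · simpa [Mθ] using hω22θ

theorem isBigO_norm_mul_Mr_sub
    (hω11r : (fun z => ‖z‖ * ω11r h u a z - β / 2) =O[𝓝[≠] 0] fun z => ‖z‖ ^ ε)
    (hω11θ : ω11θ h u a =O[𝓝[≠] 0] fun z => ‖z‖ ^ ε)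
    (hω22r : (fun z => ‖z‖ * ω22r h u a z - β / 2) =O[𝓝[≠] 0] fun z => ‖z‖ ^ ε)
    (hω22θ : ω22θ h u a =O[𝓝[≠] 0] fun z => ‖z‖ ^ ε) (i j : Fin 2) :
    (fun z => ‖z‖ * Mr h u a z i j - ((β / 2) • (1 : Matrix (Fin 2) (Fin 2) ℝ)) i j)
      =O[𝓝[≠] 0] fun z => ‖z‖ ^ ε := by
  have hcancel (g : ℂ → ℝ) : (fun z => ‖z‖ * (g z / ‖z‖)) =ᶠ[𝓝[≠] 0] g := by
    filter_upwards [self_mem_nhdsWithin] with z hz using mul_div_cancel₀ _ (norm_ne_zero_iff.mpr hz)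
  fin_cases i <;> fin_cases j
  · simpa [Mr] using hω11r
  · simpa [Mr] using hω11θ.congr' (hcancel _).symm .rfl
  · simpa [Mr] using hω22θ.neg_left.congr' (hcancel _).symm .rfl
  · simpa [Mr] using hω22r

theorem lt_add_one_and_neg_of_lt_ite_min {N n : ℤ}
    (hn : n = if a = 0 then N else min (-1) N) (hβ : β < n + 1) : β < N + 1 ∧ (a = 0 ∨ β < 0) := by
  split_ifs at hn with ha
  · exact ⟨hn ▸ hβ, .inl ha⟩
  · have hnN : (n : ℝ) ≤ N := by exact_mod_cast hn.trans_le (min_le_right ..)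
    have hn₁ : (n : ℝ) ≤ -1 := by exact_mod_cast hn.trans_le (min_le_left ..)
    exact ⟨by linarith, .inr (by linarith)⟩

theorem exists_pos_lt_one_and_le_neg (hβ : β < ν + 1) (ha : a = 0 ∨ β < 0) :
    ∃ ε > 0, ε < 1 ∧ ε ≤ ν + 1 - β ∧ (a = 0 ∨ ε ≤ -β) := by
  obtain rfl | hβ₀ := ha
  · exact ⟨min (1 / 2) (ν + 1 - β), by simpa using hβ, by norm_num, min_le_right .., .inl rfl⟩
  · exact ⟨min (1 / 2) (min (ν + 1 - β) (-β)), by simpa using ⟨hβ, hβ₀⟩, by norm_num,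
      (min_le_right ..).trans (min_le_left ..), .inr ((min_le_right ..).trans (min_le_right ..))⟩

theorem exists_isBigO_connection_sub (hh : DifferentiableOn ℝ h PDisc)
    (hu : ContDiffOn ℝ 2 u PDisc)
    (hpde : ∀ z ∈ PDisc, lap u z
      = ((pdx h z + a * z.im / ‖z‖ ^ 2) ^ 2 + (pdy h z - a * z.re / ‖z‖ ^ 2) ^ 2)
        * Real.exp (2 * u z))
    (hν : fderiv ℝ h =O[𝓝[≠] 0] fun z => ‖z‖ ^ ν) (hβ : β < ν + 1) (ha : a = 0 ∨ β < 0)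
    (hconical : Tendsto (fun z => u z + β * Real.log ‖z‖) (𝓝[≠] 0) (𝓝 c)) :
    ∃ ε > (0 : ℝ), ∀ i j : Fin 2,
      (fun z => Mθ h u a z i j - ((β / 2) • (!![0, -1; 1, 0] : Matrix (Fin 2) (Fin 2) ℝ)) i j)
        =O[𝓝[≠] 0] (fun z => ‖z‖ ^ ε) ∧
      (fun z => ‖z‖ * Mr h u a z i j - ((β / 2) • (1 : Matrix (Fin 2) (Fin 2) ℝ)) i j)
        =O[𝓝[≠] 0] fun z => ‖z‖ ^ ε := by
  obtain ⟨ε, hε, hε₁, hεν, hεa⟩ := exists_pos_lt_one_and_le_neg hβ ha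
  have hu_diff : DifferentiableOn ℝ u PDisc := hu.differentiableOn (by simp)
  have hu₂ : ∀ᶠ z in 𝓝[≠] 0, ContDiffAt ℝ 2 u z := by
    filter_upwards [eventually_mem_pDisc] with z hz
      using (hu z hz).contDiffAt (isOpen_pDisc.mem_nhds hz)
  have hexp := isBigO_exp_of_tendsto_add_mul_log hconical
  have hdh := isBigO_exp_smul_fderiv hexp hν hεν
  have hexpa := isBigO_exp_mul_const hexp hεa
  have hdu := isBigO_fderiv_add_mul_log hu₂ hconical hε hε₁
    (isBigO_laplacian_of_lap_eq hh hu hpde hε hdh hexpa)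
  have hr := isBigO_exp_mul_norm_mul_pdr hh hdh
  have hθ := isBigO_exp_mul_pdθ_sub hh hdh hexpa
  have hur := isBigO_norm_mul_pdr_add hu_diff hdu
  have huθ := isBigO_pdθ hu_diff hdu
  have hω11r : (fun z => ‖z‖ * ω11r h u a z - β / 2) =O[𝓝[≠] 0] fun z => ‖z‖ ^ ε :=
    ((hr.sub hur).const_mul_left (1 / 2)).congr_left fun z => by rw [ω11r]; ring
  have hω11θ : ω11θ h u a =O[𝓝[≠] 0] fun z => ‖z‖ ^ ε :=
    ((hθ.sub huθ).const_mul_left (1 / 2)).congr_left fun z => by rw [ω11θ]; ring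
  have hω22r : (fun z => ‖z‖ * ω22r h u a z - β / 2) =O[𝓝[≠] 0] fun z => ‖z‖ ^ ε :=
    ((hr.add hur).const_mul_left (-1 / 2)).congr_left fun z => by rw [ω22r]; ring
  have hω22θ : ω22θ h u a =O[𝓝[≠] 0] fun z => ‖z‖ ^ ε :=
    ((hθ.add huθ).const_mul_left (-1 / 2)).congr_left fun z => by rw [ω22θ]; ring
  exact ⟨ε, hε, fun i j => ⟨isBigO_Mθ_sub hω11r hω11θ hω22r hω22θ i j,
    isBigO_norm_mul_Mr_sub hω11r hω11θ hω22r hω22θ i j⟩⟩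

end ConnectionForm

end ConicalSpecialKahler

open Asymptotics ConicalSpecialKahler in
theorem stmt12_general (a : ℝ) (h u : ℂ → ℝ)
    (hh : DifferentiableOn ℝ h PDisc) (hu : ContDiffOn ℝ 2 u PDisc)
    (hpde : ∀ z ∈ PDisc, lap u z
      = ((pdx h z + a * z.im / ‖z‖ ^ 2) ^ 2 + (pdy h z - a * z.re / ‖z‖ ^ 2) ^ 2)
        * Real.exp (2 * u z))
    (ν : ℝ) (hν : fderiv ℝ h =O[𝓝[PDisc] 0] fun z => ‖z‖ ^ ν)
    (β : ℝ) (hβ : β < ν + 1 ∧ (a = 0 ∨ β < 0)) (c : ℝ)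
    (hconical : Tendsto (fun z => u z + β * Real.log ‖z‖) (𝓝[PDisc] 0) (𝓝 c)) :
    (∀ i j : Fin 2,
      Tendsto (fun z => Mθ h u a z i j) (𝓝[PDisc] 0)
        (𝓝 (((β / 2) • (!![0, -1; 1, 0] : Matrix (Fin 2) (Fin 2) ℝ)) i j))) ∧
    ∃ ε > (0 : ℝ), ∀ i j : Fin 2,
      Tendsto
        (fun z => ‖z‖ ^ (-ε) *
          (‖z‖ * Mr h u a z i j - ((β / 2) • (1 : Matrix (Fin 2) (Fin 2) ℝ)) i j))
        (𝓝[PDisc] 0) (𝓝 0) := by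
  rw [nhdsWithin_pDisc_zero] at hν hconical ⊢
  obtain ⟨ε, hε, hM⟩ := exists_isBigO_connection_sub hh hu hpde hν hβ.1 hβ.2 hconical
  refine ⟨fun i j => ?_, ε / 2, half_pos hε, fun i j => ?_⟩
  · rw [← tendsto_sub_nhds_zero_iff]
    simpa using tendsto_norm_rpow_neg_mul_of_isBigO hε (hM i j).1
  · exact tendsto_norm_rpow_neg_mul_of_isBigO (half_lt_self hε) (hM i j).2

theorem stmt12 (a : ℝ) (h u : ℂ → ℝ)
    (hh : ContDiffOn ℝ 2 h PDisc) (hu : ContDiffOn ℝ 2 u PDisc)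
    (hharm : ∀ z ∈ PDisc, lap h z = 0)
    (hpde : ∀ z ∈ PDisc, lap u z
      = ((pdx h z + a * z.im / ‖z‖ ^ 2) ^ 2 + (pdy h z - a * z.re / ‖z‖ ^ 2) ^ 2)
        * Real.exp (2 * u z))
    (N : ℤ) (G : ℂ → ℂ)
    (hGhol : DifferentiableOn ℂ G (Metric.ball (0 : ℂ) 1)) (hG0 : G 0 ≠ 0)
    (hord : ∀ z ∈ PDisc, (pdx h z : ℂ) - (pdy h z : ℂ) * Complex.I = z ^ N * G z)
    (n : ℤ) (hn : n = if a = 0 then N else min (-1) N)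
    (β : ℝ) (hβ : β < (n : ℝ) + 1) (c : ℝ)
    (hconical : Tendsto (fun z => u z + β * Real.log ‖z‖) (𝓝[PDisc] 0) (𝓝 c)) :
    (∀ i j : Fin 2,
      Tendsto (fun z => Mθ h u a z i j) (𝓝[PDisc] 0)
        (𝓝 (((β / 2) • (!![0, -1; 1, 0] : Matrix (Fin 2) (Fin 2) ℝ)) i j))) ∧
    ∃ ε > (0 : ℝ), ∀ i j : Fin 2,
      Tendsto
        (fun z => ‖z‖ ^ (-ε) *
          (‖z‖ * Mr h u a z i j - ((β / 2) • (1 : Matrix (Fin 2) (Fin 2) ℝ)) i j))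
        (𝓝[PDisc] 0) (𝓝 0) := by
  exact stmt12_general a h u (hh.differentiableOn (by simp)) hu hpde N
    (ConicalSpecialKahler.isBigO_fderiv_of_eq_zpow_mul (hh.differentiableOn (by simp))
      (hGhol.continuousOn.continuousAt (Metric.ball_mem_nhds 0 one_pos)) hord)
    β (ConicalSpecialKahler.lt_add_one_and_neg_of_lt_ite_min hn hβ) c hconical
end

section
/- Let a ∈ ℝ and let h, u be real C² functions on the punctured unit disc B₁* such that Δh = 0 and Δu = ((∂h/∂x + a·y/|z|²)² + (∂h/∂y − a·x/|z|²)²)·e^{2u}. Assume the holomorphic function F(z) := ∂h/∂x − i·∂h/∂y has finite order N at 0, set n := N if a = 0 and n := min(−1, N) if a ≠ 0, and assume that u(z) + (n+1)·log|z| + log|log|z|| converges to a finite limit as z → 0. Let M_θ and M_r be the matrix components of the connection form ω_∇ determined by (h,u,a). Then there exists b ∈ ℂ with |b| = 1 such that, uniformly in θ as r → 0 (with ρ = log r): M_θ(re^{iθ}) = (1/2)·((n+1)·[[0,−1],[1,0]] + ρ^{-1}·[[Im(b e^{i(n+1)θ}), −1+Re(b e^{i(n+1)θ})],[1+Re(b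 e^{i(n+1)θ}), −Im(b e^{i(n+1)θ})]]) + o(ρ^{-1}), and r·M_r(re^{iθ}) = (1/2)·((n+1)·𝟙 + ρ^{-1}·[[1−Re(b e^{i(n+1)θ}), Im(b e^{i(n+1)θ})],[Im(b e^{i(n+1)θ}), 1+Re(b e^{i(n+1)θ})]]) + o(ρ^{-1}). -/
open Complex Real Set Topology Filter Matrix

/-- The model `dθ`-component for a logarithmic singularity of order `(n+1)/2` with constant `b`. -/
noncomputable def logModelθ (n : ℤ) (b : ℂ) (r θ : ℝ) : Matrix (Fin 2) (Fin 2) ℝ :=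
  (1 / 2 : ℝ) •
    (((n : ℝ) + 1) • (!![0, -1; 1, 0] : Matrix (Fin 2) (Fin 2) ℝ)
      + (Real.log r)⁻¹ •
        !![(b * Complex.exp ((((n : ℝ) + 1) * θ : ℝ) * Complex.I)).im,
            -1 + (b * Complex.exp ((((n : ℝ) + 1) * θ : ℝ) * Complex.I)).re;
            1 + (b * Complex.exp ((((n : ℝ) + 1) * θ : ℝ) * Complex.I)).re,
            -(b * Complex.exp ((((n : ℝ) + 1) * θ : ℝ) * Complex.I)).im])

/-- The model for `r·M_r` for a logarithmic singularity of order `(n+1)/2` with constant `b`. -/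
noncomputable def logModelr (n : ℤ) (b : ℂ) (r θ : ℝ) : Matrix (Fin 2) (Fin 2) ℝ :=
  (1 / 2 : ℝ) •
    (((n : ℝ) + 1) • (1 : Matrix (Fin 2) (Fin 2) ℝ)
      + (Real.log r)⁻¹ •
        !![1 - (b * Complex.exp ((((n : ℝ) + 1) * θ : ℝ) * Complex.I)).re,
            (b * Complex.exp ((((n : ℝ) + 1) * θ : ℝ) * Complex.I)).im;
            (b * Complex.exp ((((n : ℝ) + 1) * θ : ℝ) * Complex.I)).im,
            1 + (b * Complex.exp ((((n : ℝ) + 1) * θ : ℝ) * Complex.I)).re])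

/-!
In the coordinate `w = log z` on the half-cylinder, the function
`V w = u (e ^ w) + (n + 1) Re w + log |Re w|` converges as `Re w → -∞`, and the equation for `u`
becomes `(Re w)² ΔV = ‖A‖² - 1`, where `A` is the coefficient of the twisted differential `dh + aφ`
after division by its model size. Since `dh + aφ` has a pure leading power, `A` has a limit `b`.
On the balls of radius `|Re w| / 2` the equation for `V` is scale invariant: comparison with a
paraboloid shows that a limit `‖b‖² - 1 ≠ 0` is incompatible with `V` converging, so `‖b‖ = 1`,
and the interior gradient estimate then gives `∇V = o(1 / Re w)`. The connection matrices are
linear in `e ^ u (dh + aφ)` and `du`, that is in `A / Re w` and `∇V`.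
-/

section MaximumPrinciple

open InnerProductSpace Laplacian Module

variable {E F : Type*} [NormedAddCommGroup E] [NormedAddCommGroup F]

theorem hasDerivAt_add_smul [NormedSpace ℝ E] (x v : E) (t : ℝ) :
    HasDerivAt (fun s : ℝ => x + s • v) v t := by
  simpa using ((hasDerivAt_id t).smul_const v).const_add x

theorem iteratedFDeriv_two_apply_self_eq_deriv_deriv [NormedSpace ℝ E] [NormedSpace ℝ F]
    {f : E → F} {x : E} (hf : ContDiffAt ℝ 2 f x) (v : E) :
    iteratedFDeriv ℝ 2 f x ![v, v] = deriv (deriv fun t : ℝ => f (x + t • v)) 0 := by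
  have hx : Tendsto (fun s : ℝ => x + s • v) (𝓝 0) (𝓝 x) := by
    simpa using (hasDerivAt_add_smul x v 0).continuousAt.tendsto
  have hfirst : deriv (fun t : ℝ => f (x + t • v)) =ᶠ[𝓝 0] fun s => fderiv ℝ f (x + s • v) v := by
    filter_upwards [hx.eventually (hf.eventually (by simp))] with s hs
    exact ((hs.differentiableAt two_ne_zero).hasFDerivAt.comp_hasDerivAt s
      (hasDerivAt_add_smul x v s)).deriv
  have hf' : DifferentiableAt ℝ (fderiv ℝ f) x :=
    (hf.fderiv_right (m := 1) le_rfl).differentiableAt one_ne_zero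
  have hsecond := hf'.hasFDerivAt.comp_hasDerivAt_of_eq (0 : ℝ) (hasDerivAt_add_smul x v 0)
    (by simp)
  rw [iteratedFDeriv_two_apply, hfirst.deriv_eq]
  exact ((hsecond.clm_apply (hasDerivAt_const (0 : ℝ) v)).deriv.trans (by simp)).symm

theorem deriv_deriv_nonpos_of_isLocalMax {f : ℝ → ℝ} {x : ℝ} (hmax : IsLocalMax f x)
    (hf : ContinuousAt f x) : deriv (deriv f) x ≤ 0 := by
  by_contra! hpos
  have hmin : IsLocalMin f x := isLocalMin_of_deriv_deriv_pos hpos hmax.deriv_eq_zero hf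
  have hconst : f =ᶠ[𝓝 x] fun _ => f x := by
    filter_upwards [hmax, hmin] with y hle hge using le_antisymm hle hge
  have hzero : deriv (deriv f) x = 0 := by simpa using hconst.deriv.deriv_eq
  exact hpos.ne' hzero

variable [InnerProductSpace ℝ E]

theorem contDiff_norm_sub_sq (p : E) : ContDiff ℝ 2 fun x : E => ‖x - p‖ ^ 2 :=
  (contDiff_id.sub contDiff_const).norm_sq ℝ

section HalfBall

variable {f : E → ℝ} {e x₀ : E} {d α β : ℝ}

/-- The comparison function in the interior gradient estimate on the half-ball
`{‖x‖ ≤ d, 0 ≤ ⟪e, x⟫}`, the second term being a nonnegative function there which vanishes on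
the flat face. -/
noncomputable def halfBallBarrier (e : E) (d α β : ℝ) (x : E) : ℝ :=
  α * ‖x‖ ^ 2 + β * (d * inner ℝ e x - inner ℝ e x ^ 2)

theorem contDiff_halfBallBarrier (e : E) (d α β : ℝ) :
    ContDiff ℝ 2 (halfBallBarrier e d α β) :=
  have hinner : ContDiff ℝ 2 fun x : E => (inner ℝ e x : ℝ) := contDiff_const.inner ℝ contDiff_id
  (contDiff_const.mul (contDiff_norm_sq ℝ)).add
    (contDiff_const.mul ((contDiff_const.mul hinner).sub (hinner.pow 2)))

theorem mul_norm_sq_le_halfBallBarrier (he : ‖e‖ ≤ 1) {x : E} (hxd : ‖x‖ ≤ d)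
    (hx : 0 ≤ inner ℝ e x) (hβ : 0 ≤ β) : α * ‖x‖ ^ 2 ≤ halfBallBarrier e d α β x := by
  have hinner : inner ℝ e x ≤ d :=
    (real_inner_le_norm e x).trans ((mul_le_of_le_one_left (norm_nonneg x) he).trans hxd)
  have hnonneg : 0 ≤ d * inner ℝ e x - inner ℝ e x ^ 2 := by nlinarith
  exact le_add_of_nonneg_right (mul_nonneg hβ hnonneg)

theorem le_mul_of_le_halfBallBarrier (he : ‖e‖ = 1) (hd : 0 < d) {m : ℝ} (hf0 : f 0 = 0)
    (hf : HasDerivAt (fun t : ℝ => f (t • e)) m 0)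
    (hle : ∀ x ∈ Metric.closedBall (0 : E) d, 0 ≤ inner ℝ e x →
      f x ≤ halfBallBarrier e d α β x) : m ≤ β * d := by
  have hbound : Tendsto (fun t : ℝ => α * t + β * (d - t)) (𝓝[>] 0) (𝓝 (β * d)) := by
    have : Continuous fun t : ℝ => α * t + β * (d - t) := by fun_prop
    simpa using (this.tendsto 0).mono_left nhdsWithin_le_nhds
  refine le_of_tendsto_of_tendsto hf.tendsto_slope_zero_right hbound ?_
  filter_upwards [Ioo_mem_nhdsGT hd] with t ⟨ht, htd⟩
  have hbarrier : f (t • e) ≤ halfBallBarrier e d α β (t • e) :=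
    hle _ (by simp [norm_smul, he, abs_of_pos ht, htd.le])
      (by rw [inner_smul_right, real_inner_self_eq_norm_sq, he]; simp [ht.le])
  simp only [halfBallBarrier, norm_smul, inner_smul_right, real_inner_self_eq_norm_sq, he,
    Real.norm_eq_abs, mul_one, one_pow, sq_abs] at hbarrier
  simp only [zero_add, zero_smul, hf0, sub_zero, smul_eq_mul]
  rw [inv_mul_le_iff₀ ht]
  linarith

/-- The odd part of `x ↦ f (x₀ + x)` under the reflection in the hyperplane orthogonal to `e`. -/
noncomputable def oddPart (f : E → ℝ) (x₀ e : E) (x : E) : ℝ :=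
  (f (x₀ + x) - f (x₀ + (ℝ ∙ e)ᗮ.reflection x)) / 2

theorem oddPart_eq_zero {x : E} (hx : inner ℝ e x = 0) : oddPart f x₀ e x = 0 := by
  rw [oddPart, Submodule.reflection_mem_subspace_eq_self
    (Submodule.mem_orthogonal_singleton_iff_inner_right.2 hx), sub_self, zero_div]

theorem abs_oddPart_le {c M : ℝ} (hM : ∀ x ∈ Metric.closedBall x₀ d, |f x - c| ≤ M) {x : E}
    (hx : x ∈ Metric.closedBall 0 d) : |oddPart f x₀ e x| ≤ M := by
  have hfx := abs_le.1 (hM (x₀ + x) (by simpa using hx))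
  have hfRx := abs_le.1 (hM (x₀ + (ℝ ∙ e)ᗮ.reflection x) (by simpa using hx))
  exact abs_le.2 ⟨by unfold oddPart; linarith, by unfold oddPart; linarith⟩

theorem hasDerivAt_oddPart (hf : DifferentiableAt ℝ f x₀) :
    HasDerivAt (fun t : ℝ => oddPart f x₀ e (t • e)) (fderiv ℝ f x₀ e) 0 := by
  have hline (v : E) : HasDerivAt (fun t : ℝ => f (x₀ + t • v)) (fderiv ℝ f x₀ v) 0 :=
    hf.hasFDerivAt.hasLineDerivAt v
  simp only [oddPart, map_smul, Submodule.reflection_orthogonalComplement_singleton_eq_neg]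
  refine (((hline e).sub (hline (-e))).div_const 2).congr_deriv ?_
  rw [map_neg]
  ring

theorem contDiffAt_oddPart {x : E} (hx : ContDiffAt ℝ 2 f (x₀ + x))
    (hRx : ContDiffAt ℝ 2 f (x₀ + (ℝ ∙ e)ᗮ.reflection x)) :
    ContDiffAt ℝ 2 (oddPart f x₀ e) x :=
  ((hx.comp x (contDiffAt_const.add contDiffAt_id)).sub (hRx.comp x
    (contDiffAt_const.add (LinearIsometryEquiv.contDiff _).contDiffAt))).div_const 2

end HalfBall

variable [FiniteDimensional ℝ E] [NormedSpace ℝ F]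

theorem laplacian_eq_sum_deriv_deriv {ι : Type*} [Fintype ι] (b : OrthonormalBasis ι ℝ E)
    {f : E → F} {x : E} (hf : ContDiffAt ℝ 2 f x) :
    Δ f x = ∑ i, deriv (deriv fun t : ℝ => f (x + t • b i)) 0 := by
  rw [laplacian_eq_iteratedFDeriv_orthonormalBasis f b]
  simp only [iteratedFDeriv_two_apply_self_eq_deriv_deriv hf]

theorem laplacian_nonpos_of_isLocalMax {f : E → ℝ} {x : E} (hmax : IsLocalMax f x)
    (hf : ContDiffAt ℝ 2 f x) : Δ f x ≤ 0 := by
  rw [laplacian_eq_sum_deriv_deriv (stdOrthonormalBasis ℝ E) hf]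
  refine Finset.sum_nonpos fun i _ => ?_
  have hline := (hasDerivAt_add_smul x (stdOrthonormalBasis ℝ E i) 0).continuousAt
  refine deriv_deriv_nonpos_of_isLocalMax ?_ (hf.continuousAt.comp_of_eq hline (by simp))
  exact IsLocalMax.comp_continuous (f := f) (by simpa using hmax) hline

theorem laplacian_comp_add_linearIsometryEquiv (p : E) (φ : E ≃ₗᵢ[ℝ] E) {f : E → F} {x : E}
    (hf : ContDiffAt ℝ 2 f (p + φ x)) : Δ (fun y => f (p + φ y)) x = Δ f (p + φ x) := by
  have hφ : ContDiffAt ℝ 2 (fun y => f (p + φ y)) x :=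
    hf.comp x (contDiffAt_const.add φ.contDiff.contDiffAt)
  rw [laplacian_eq_sum_deriv_deriv (stdOrthonormalBasis ℝ E) hφ,
    laplacian_eq_sum_deriv_deriv ((stdOrthonormalBasis ℝ E).map φ) hf]
  simp only [map_add, map_smul, OrthonormalBasis.map_apply, add_assoc]

theorem laplacian_oddPart {f : E → ℝ} {x₀ e x : E} (hx : ContDiffAt ℝ 2 f (x₀ + x))
    (hRx : ContDiffAt ℝ 2 f (x₀ + (ℝ ∙ e)ᗮ.reflection x)) :
    Δ (oddPart f x₀ e) x = oddPart (Δ f) x₀ e x := by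
  set R := (ℝ ∙ e)ᗮ.reflection
  have hfx : ContDiffAt ℝ 2 (fun y => f (x₀ + y)) x :=
    hx.comp x (contDiffAt_const.add contDiffAt_id)
  have hfRx : ContDiffAt ℝ 2 (fun y => f (x₀ + R y)) x :=
    hRx.comp x (contDiffAt_const.add R.contDiff.contDiffAt)
  have hodd : oddPart f x₀ e = (2 : ℝ)⁻¹ • ((fun y => f (x₀ + y)) - fun y => f (x₀ + R y)) := by
    ext y
    simp only [oddPart, Pi.smul_apply, Pi.sub_apply, smul_eq_mul, R]
    ring
  have hid := laplacian_comp_add_linearIsometryEquiv x₀ (.refl ℝ E) hx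
  simp only [LinearIsometryEquiv.coe_refl, id_eq] at hid
  rw [hodd, laplacian_smul (f := (fun y => f (x₀ + y)) - _) _ (hfx.sub hfRx),
    hfx.laplacian_sub hfRx, hid, laplacian_comp_add_linearIsometryEquiv x₀ R hRx, oddPart,
    smul_eq_mul]
  ring

theorem laplacian_eq_of_quadratic {ι : Type*} [Fintype ι] (b : OrthonormalBasis ι ℝ E)
    {f ℓ q : E → ℝ} {x : E} (hf : ContDiffAt ℝ 2 f x)
    (hquad : ∀ (v : E) (t : ℝ), f (x + t • v) = f x + ℓ v * t + q v * t ^ 2) :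
    Δ f x = 2 * ∑ i, q (b i) := by
  rw [laplacian_eq_sum_deriv_deriv b hf, Finset.mul_sum]
  refine Finset.sum_congr rfl fun i _ => ?_
  have hfirst : deriv (fun t : ℝ => f (x + t • b i)) = fun t => ℓ (b i) + q (b i) * (2 * t) := by
    ext t
    simp only [hquad]
    exact ((((hasDerivAt_id t).const_mul _).const_add _).add
      ((hasDerivAt_pow 2 t).const_mul _)).deriv.trans (by simp)
  rw [hfirst]
  simp [mul_comm]

theorem laplacian_norm_sub_sq (p x : E) :
    Δ (fun y : E => ‖y - p‖ ^ 2) x = 2 * finrank ℝ E := by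
  rw [laplacian_eq_of_quadratic (stdOrthonormalBasis ℝ E) (ℓ := fun v => 2 * inner ℝ (x - p) v)
    (q := fun v => ‖v‖ ^ 2) (contDiff_norm_sub_sq p).contDiffAt]
  · simp
  · intro v t
    rw [add_sub_right_comm, norm_add_sq_real, inner_smul_right, norm_smul, mul_pow,
      Real.norm_eq_abs, sq_abs]
    ring

section Comparison

variable {K U : Set E} {f : E → ℝ} {B : ℝ}

theorem le_of_laplacian_pos (hK : IsCompact K) (hU : IsOpen U) (hUK : U ⊆ K)
    (hcont : ContinuousOn f K) (hdiff : ∀ x ∈ U, ContDiffAt ℝ 2 f x) (hpos : ∀ x ∈ U, 0 < Δ f x)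
    (hbdry : ∀ x ∈ K \ U, f x ≤ B) : ∀ x ∈ K, f x ≤ B := by
  intro x hx
  obtain ⟨y, hyK, hy⟩ := hK.exists_isMaxOn ⟨x, hx⟩ hcont
  by_cases hyU : y ∈ U
  · have hlocal : IsLocalMax f y := hy.isLocalMax (mem_of_superset (hU.mem_nhds hyU) hUK)
    exact absurd (hpos y hyU) (laplacian_nonpos_of_isLocalMax hlocal (hdiff y hyU)).not_gt
  · exact (hy hx).trans (hbdry y ⟨hyK, hyU⟩)

theorem le_of_laplacian_nonneg [Nontrivial E] (hK : IsCompact K) (hU : IsOpen U) (hUK : U ⊆ K)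
    (hcont : ContinuousOn f K) (hdiff : ∀ x ∈ U, ContDiffAt ℝ 2 f x)
    (hnonneg : ∀ x ∈ U, 0 ≤ Δ f x) (hbdry : ∀ x ∈ K \ U, f x ≤ B) : ∀ x ∈ K, f x ≤ B := by
  intro x hx
  obtain ⟨R, hR⟩ := hK.isBounded.exists_norm_le
  have hperturbed : ∀ ε > 0, f x ≤ B + ε * R ^ 2 := by
    intro ε hε
    have hsq (y : E) : ContDiffAt ℝ 2 (ε • fun y : E => ‖y - 0‖ ^ 2) y :=
      (contDiff_norm_sub_sq 0).contDiffAt.const_smul ε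
    have hle := le_of_laplacian_pos (f := f + ε • fun y : E => ‖y - 0‖ ^ 2)
      (B := B + ε * R ^ 2) hK hU hUK (hcont.add (by fun_prop))
      (fun y hy => (hdiff y hy).add (hsq y))
      (fun y hy => by
        rw [(hdiff y hy).laplacian_add (hsq y),
          laplacian_smul _ (contDiff_norm_sub_sq _).contDiffAt, laplacian_norm_sub_sq, smul_eq_mul]
        have := hnonneg y hy
        have : 0 < finrank ℝ E := finrank_pos
        positivity)
      (fun y hy => by
        have := hR y hy.1
        simp only [Pi.add_apply, Pi.smul_apply, smul_eq_mul, sub_zero]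
        gcongr
        exact hbdry y hy) x hx
    simp only [Pi.add_apply, Pi.smul_apply, smul_eq_mul, sub_zero] at hle
    have : 0 ≤ ε * ‖x‖ ^ 2 := by positivity
    linarith
  have hlim : Tendsto (fun ε : ℝ => B + ε * R ^ 2) (𝓝[>] 0) (𝓝 B) := by
    have : Continuous fun ε : ℝ => B + ε * R ^ 2 := by fun_prop
    simpa using (this.tendsto 0).mono_left nhdsWithin_le_nhds
  exact ge_of_tendsto hlim (eventually_mem_nhdsWithin.mono hperturbed)

end Comparison

section Interior

variable {f : E → ℝ} {p : E} {d M : ℝ}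

theorem mul_sq_le_of_le_laplacian [Nontrivial E] {lam : ℝ} (hd : 0 < d)
    (hdiff : ∀ x ∈ Metric.closedBall p d, ContDiffAt ℝ 2 f x)
    (hM : ∀ x ∈ Metric.closedBall p d, f x ≤ M)
    (hlam : ∀ x ∈ Metric.closedBall p d, lam ≤ Δ f x) :
    lam * d ^ 2 ≤ 2 * finrank ℝ E * (M - f p) := by
  have hdim : (0 : ℝ) < finrank ℝ E := by exact_mod_cast finrank_pos
  set k := -(lam / (2 * finrank ℝ E)) with hk
  have hq (x : E) : ContDiffAt ℝ 2 (k • fun x : E => ‖x - p‖ ^ 2) x :=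
    (contDiff_norm_sub_sq p).contDiffAt.const_smul k
  have hcenter := le_of_laplacian_nonneg (f := f + k • fun x => ‖x - p‖ ^ 2)
    (U := Metric.ball p d) (B := M + k * d ^ 2) (isCompact_closedBall p d) Metric.isOpen_ball
    Metric.ball_subset_closedBall
    (fun x hx => ((hdiff x hx).add (hq x)).continuousAt.continuousWithinAt)
    (fun x hx => (hdiff x (Metric.ball_subset_closedBall hx)).add (hq x))
    (fun x hx => by
      rw [(hdiff x (Metric.ball_subset_closedBall hx)).laplacian_add (hq x),
        laplacian_smul _ (contDiff_norm_sub_sq _).contDiffAt, laplacian_norm_sub_sq, smul_eq_mul,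
        show k * (2 * finrank ℝ E) = -lam by rw [hk]; field_simp]
      linarith [hlam x (Metric.ball_subset_closedBall hx)])
    (fun x hx => by
      have hnorm : ‖x - p‖ = d := by
        rw [← dist_eq_norm]
        exact le_antisymm hx.1 (not_lt.1 hx.2)
      simp only [Pi.add_apply, Pi.smul_apply, smul_eq_mul, hnorm]
      linarith [hM x hx.1])
    p (Metric.mem_closedBall_self hd.le)
  simp only [Pi.add_apply, Pi.smul_apply, sub_self, norm_zero, smul_eq_mul] at hcenter
  have hle : -k * d ^ 2 ≤ M - f p := by linarith
  calc lam * d ^ 2 = 2 * finrank ℝ E * (-k * d ^ 2) := by rw [hk]; field_simp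
    _ ≤ 2 * finrank ℝ E * (M - f p) := by gcongr

end Interior

section Gradient

theorem laplacian_halfBallBarrier {e : E} (he : ‖e‖ = 1) (d α β : ℝ) (x : E) :
    Δ (halfBallBarrier e d α β) x = 2 * (α * finrank ℝ E - β) := by
  rw [laplacian_eq_of_quadratic (stdOrthonormalBasis ℝ E)
    (ℓ := fun v => 2 * α * inner ℝ x v + β * (d * inner ℝ e v - 2 * inner ℝ e x * inner ℝ e v))
    (q := fun v => α * ‖v‖ ^ 2 - β * inner ℝ e v ^ 2)
    (contDiff_halfBallBarrier e d α β).contDiffAt]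
  · rw [Finset.sum_sub_distrib, ← Finset.mul_sum, ← Finset.mul_sum,
      OrthonormalBasis.sum_sq_inner_left, he]
    simp
  · intro v t
    simp only [halfBallBarrier]
    rw [norm_add_sq_real, inner_smul_right, norm_smul, mul_pow,
      Real.norm_eq_abs, sq_abs, inner_add_right, inner_smul_right]
    ring

variable {f : E → ℝ} {e x₀ : E} {d M N : ℝ}

theorem le_halfBallBarrier (he : ‖e‖ = 1) (hd : 0 < d)
    (hdiff : ∀ x ∈ Metric.closedBall (0 : E) d, ContDiffAt ℝ 2 f x)
    (hM : ∀ x ∈ Metric.closedBall (0 : E) d, |f x| ≤ M)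
    (hN : ∀ x ∈ Metric.closedBall (0 : E) d, |Δ f x| ≤ N)
    (hzero : ∀ x, inner ℝ e x = 0 → f x = 0)
    {x : E} (hxd : x ∈ Metric.closedBall 0 d) (hx : 0 ≤ inner ℝ e x) :
    f x ≤ halfBallBarrier e d (M / d ^ 2) (finrank ℝ E * (M / d ^ 2) + N / 2) x := by
  have hzero_mem : (0 : E) ∈ Metric.closedBall 0 d := Metric.mem_closedBall_self hd.le
  have hM0 : 0 ≤ M := (abs_nonneg _).trans (hM 0 hzero_mem)
  have hN0 : 0 ≤ N := (abs_nonneg _).trans (hN 0 hzero_mem)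
  have : Nontrivial E := ⟨e, 0, by rintro rfl; simp at he⟩
  have hcont : Continuous fun y : E => (inner ℝ e y : ℝ) := continuous_const.inner continuous_id
  set b := halfBallBarrier e d (M / d ^ 2) (finrank ℝ E * (M / d ^ 2) + N / 2)
  have hb (y : E) : ContDiffAt ℝ 2 b y := (contDiff_halfBallBarrier _ _ _ _).contDiffAt
  have hle := le_of_laplacian_nonneg (f := f - b) (B := 0)
    (K := Metric.closedBall 0 d ∩ {y | 0 ≤ inner ℝ e y})
    (U := Metric.ball 0 d ∩ {y | 0 < inner ℝ e y})
    ((isCompact_closedBall 0 d).inter_right (isClosed_le continuous_const hcont))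
    (Metric.isOpen_ball.inter (isOpen_lt continuous_const hcont))
    (inter_subset_inter Metric.ball_subset_closedBall fun y (hy : 0 < inner ℝ e y) => hy.le)
    (fun y hy => ((hdiff y hy.1).sub (hb y)).continuousAt.continuousWithinAt)
    (fun y hy => (hdiff y (Metric.ball_subset_closedBall hy.1)).sub (hb y))
    (fun y hy => by
      have hyd := Metric.ball_subset_closedBall hy.1
      rw [(hdiff y hyd).laplacian_sub (hb y), laplacian_halfBallBarrier he]
      linarith [neg_le_of_abs_le (hN y hyd)])
    (fun y ⟨⟨hyd, hye⟩, hyU⟩ => by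
      have hyd' : ‖y‖ ≤ d := mem_closedBall_zero_iff.1 hyd
      have hye' : 0 ≤ inner ℝ e y := hye
      refine sub_nonpos.2 (le_trans ?_
        (mul_norm_sq_le_halfBallBarrier he.le hyd' hye (α := M / d ^ 2) (by positivity)))
      rcases hye'.eq_or_lt with hflat | hpos
      · rw [hzero y hflat.symm]
        positivity
      · have hnorm : ‖y‖ = d :=
          hyd'.antisymm (not_lt.1 fun hlt => hyU ⟨mem_ball_zero_iff.2 hlt, hpos⟩)
        rw [hnorm, div_mul_cancel₀ _ (by positivity)]
        exact le_of_abs_le (hM y hyd))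
    x ⟨hxd, hx⟩
  exact sub_nonpos.1 hle

theorem fderiv_apply_le_of_abs_laplacian_le {c : ℝ} (he : ‖e‖ = 1) (hd : 0 < d)
    (hdiff : ∀ x ∈ Metric.closedBall x₀ d, ContDiffAt ℝ 2 f x)
    (hM : ∀ x ∈ Metric.closedBall x₀ d, |f x - c| ≤ M)
    (hN : ∀ x ∈ Metric.closedBall x₀ d, |Δ f x| ≤ N) :
    fderiv ℝ f x₀ e ≤ finrank ℝ E * M / d + d * N / 2 := by
  have hmem {x : E} (hx : x ∈ Metric.closedBall 0 d) :
      x₀ + x ∈ Metric.closedBall x₀ d ∧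
        x₀ + (ℝ ∙ e)ᗮ.reflection x ∈ Metric.closedBall x₀ d := by
    simpa using hx
  have hle (x : E) := le_halfBallBarrier (f := oddPart f x₀ e) (x := x) he hd
    (fun x hx => contDiffAt_oddPart (hdiff _ (hmem hx).1) (hdiff _ (hmem hx).2))
    (fun _ => abs_oddPart_le hM)
    (fun x hx => by
      rw [laplacian_oddPart (hdiff _ (hmem hx).1) (hdiff _ (hmem hx).2)]
      exact abs_oddPart_le (c := 0) (by simpa only [sub_zero] using hN) hx)
    (fun x hx => oddPart_eq_zero hx)
  refine (le_mul_of_le_halfBallBarrier he hd (oddPart_eq_zero (inner_zero_right e))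
    (hasDerivAt_oddPart ((hdiff _ (Metric.mem_closedBall_self hd.le)).differentiableAt
      two_ne_zero)) hle).trans_eq ?_
  field_simp

theorem norm_fderiv_le_of_abs_laplacian_le {c : ℝ} (hd : 0 < d)
    (hdiff : ∀ x ∈ Metric.closedBall x₀ d, ContDiffAt ℝ 2 f x)
    (hM : ∀ x ∈ Metric.closedBall x₀ d, |f x - c| ≤ M)
    (hN : ∀ x ∈ Metric.closedBall x₀ d, |Δ f x| ≤ N) :
    ‖fderiv ℝ f x₀‖ ≤ finrank ℝ E * M / d + d * N / 2 := by
  have hx₀ : x₀ ∈ Metric.closedBall x₀ d := Metric.mem_closedBall_self hd.le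
  have hM0 : 0 ≤ M := (abs_nonneg _).trans (hM x₀ hx₀)
  have hN0 : 0 ≤ N := (abs_nonneg _).trans (hN x₀ hx₀)
  have hunit (e : E) (he : ‖e‖ = 1) :
      ‖fderiv ℝ f x₀ e‖ ≤ finrank ℝ E * M / d + d * N / 2 := by
    have hneg := fderiv_apply_le_of_abs_laplacian_le (by rwa [norm_neg]) hd hdiff hM hN (e := -e)
    rw [map_neg] at hneg
    exact abs_le'.2 ⟨fderiv_apply_le_of_abs_laplacian_le he hd hdiff hM hN, hneg⟩
  exact ContinuousLinearMap.opNorm_le_of_unit_norm (by positivity) hunit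

end Gradient

end MaximumPrinciple

section HalfPlane

open InnerProductSpace Laplacian Module Asymptotics

theorem abs_re_sub_re_le_of_mem_closedBall {v w : ℂ} {d : ℝ} (hv : v ∈ Metric.closedBall w d) :
    |v.re - w.re| ≤ d := by
  rw [← Complex.sub_re]
  exact (Complex.abs_re_le_norm _).trans (mem_closedBall_iff_norm.1 hv)

theorem eventually_re_neg : ∀ᶠ w in comap Complex.re atBot, w.re < 0 :=
  tendsto_comap.eventually (eventually_lt_atBot 0)

theorem eventually_forall_closedBall_half_re {P : ℂ → Prop}
    (h : ∀ᶠ w in comap Complex.re atBot, P w) :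
    ∀ᶠ w in comap Complex.re atBot, ∀ v ∈ Metric.closedBall w (-w.re / 2), P v := by
  rw [eventually_comap, eventually_atBot] at h
  obtain ⟨B, hB⟩ := h
  rw [eventually_comap]
  filter_upwards [eventually_le_atBot (min 0 (2 * B))] with x hx w hw v hv
  rw [le_min_iff] at hx
  refine hB v.re ?_ v rfl
  linarith [le_of_abs_le (abs_re_sub_re_le_of_mem_closedBall hv)]

variable {V : ℂ → ℝ} {c κ : ℝ}

theorem nonpos_of_tendsto_re_sq_mul_laplacian
    (hdiff : ∀ᶠ w in comap Complex.re atBot, ContDiffAt ℝ 2 V w)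
    (hV : Tendsto V (comap Complex.re atBot) (𝓝 c))
    (hΔ : Tendsto (fun w : ℂ => w.re ^ 2 * Δ V w) (comap Complex.re atBot) (𝓝 κ)) : κ ≤ 0 := by
  by_contra! hκ
  have hclose : ∀ᶠ w in comap Complex.re atBot, |V w - c| < κ / 200 :=
    hV.eventually (eventually_abs_sub_lt c (by positivity))
  have hlarge : ∀ᶠ w : ℂ in comap Complex.re atBot, κ / 2 < w.re ^ 2 * Δ V w :=
    hΔ.eventually_const_lt (half_lt_self hκ)
  have : (comap Complex.re atBot).NeBot := atBot_neBot.comap_of_surj Complex.re_surjective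
  obtain ⟨w, hw, hball⟩ := (eventually_re_neg.and (eventually_forall_closedBall_half_re
    (hdiff.and (hclose.and hlarge)))).exists
  have hle := mul_sq_le_of_le_laplacian (f := V) (p := w) (d := -w.re / 2) (M := c + κ / 200)
    (lam := 2 * κ / (9 * w.re ^ 2)) (by linarith) (fun v hv => (hball v hv).1)
    (fun v hv => by linarith [le_of_abs_le (hball v hv).2.1.le])
    (fun v hv => by
      have hv_re := abs_le.1 (abs_re_sub_re_le_of_mem_closedBall hv)
      have hsq : v.re ^ 2 ≤ 9 / 4 * w.re ^ 2 := by nlinarith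
      have hΔv := (hball v hv).2.2
      have hpos : 0 < Δ V v := by
        by_contra! hle
        nlinarith [sq_nonneg v.re]
      rw [div_le_iff₀ (by have := hw.ne; positivity)]
      nlinarith)
  have hVw := neg_le_of_abs_le (hball w (Metric.mem_closedBall_self (by linarith))).2.1.le
  rw [Complex.finrank_real_complex] at hle
  have : 2 * κ / (9 * w.re ^ 2) * (-w.re / 2) ^ 2 = κ / 18 := by
    have := hw.ne
    field_simp
    norm_num
  push_cast at hle
  linarith

theorem eq_zero_of_tendsto_re_sq_mul_laplacian
    (hdiff : ∀ᶠ w in comap Complex.re atBot, ContDiffAt ℝ 2 V w)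
    (hV : Tendsto V (comap Complex.re atBot) (𝓝 c))
    (hΔ : Tendsto (fun w : ℂ => w.re ^ 2 * Δ V w) (comap Complex.re atBot) (𝓝 κ)) : κ = 0 := by
  refine le_antisymm (nonpos_of_tendsto_re_sq_mul_laplacian hdiff hV hΔ) (neg_nonpos.1 ?_)
  refine nonpos_of_tendsto_re_sq_mul_laplacian (V := -V) (hdiff.mono fun w hw => hw.neg) hV.neg ?_
  simpa only [laplacian_neg, Pi.neg_apply, mul_neg] using hΔ.neg

theorem fderiv_isLittleO_re_inv
    (hdiff : ∀ᶠ w in comap Complex.re atBot, ContDiffAt ℝ 2 V w)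
    (hV : Tendsto V (comap Complex.re atBot) (𝓝 c))
    (hΔ : Tendsto (fun w : ℂ => w.re ^ 2 * Δ V w) (comap Complex.re atBot) (𝓝 0)) :
    fderiv ℝ V =o[comap Complex.re atBot] fun w => w.re⁻¹ := by
  refine isLittleO_iff.2 fun ε hε => ?_
  have hclose : ∀ᶠ w in comap Complex.re atBot, |V w - c| < ε / 5 :=
    hV.eventually (eventually_abs_sub_lt c (by positivity))
  have hsmall : ∀ᶠ w : ℂ in comap Complex.re atBot, |w.re ^ 2 * Δ V w - 0| < ε / 5 :=
    hΔ.eventually (eventually_abs_sub_lt 0 (by positivity))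
  filter_upwards [eventually_re_neg,
    eventually_forall_closedBall_half_re (hdiff.and (hclose.and hsmall))] with w hw hball
  have hle := norm_fderiv_le_of_abs_laplacian_le (f := V) (x₀ := w) (d := -w.re / 2) (c := c)
    (M := ε / 5) (N := 4 * ε / (5 * w.re ^ 2)) (by linarith) (fun v hv => (hball v hv).1)
    (fun v hv => (hball v hv).2.1.le)
    (fun v hv => by
      have hv_re := abs_le.1 (abs_re_sub_re_le_of_mem_closedBall hv)
      have hsq : w.re ^ 2 / 4 ≤ v.re ^ 2 := by nlinarith
      have hΔv := (hball v hv).2.2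
      rw [sub_zero, abs_mul, abs_sq] at hΔv
      rw [le_div_iff₀ (by have := hw.ne; positivity)]
      nlinarith [abs_nonneg (Δ V v)])
  refine hle.trans_eq ?_
  rw [norm_inv, Real.norm_eq_abs, abs_of_neg hw, Complex.finrank_real_complex]
  have := hw.ne
  push_cast
  field_simp
  norm_num

end HalfPlane

section ComplexPlane

open InnerProductSpace Laplacian

/-- The complex gradient `∂f/∂x - i ∂f/∂y = 2 ∂f/∂z` of a real function on `ℂ`, so that
`df = Re (conjGrad f dz)`. -/
noncomputable def conjGrad (f : ℂ → ℝ) (z : ℂ) : ℂ :=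
  fderiv ℝ f z 1 - fderiv ℝ f z Complex.I * Complex.I

variable {f g : ℂ → ℝ} {z w : ℂ}

theorem conjGrad_eq_pdx_sub_pdy (hf : DifferentiableAt ℝ f z) :
    conjGrad f z = pdx f z - pdy f z * Complex.I := by
  have hx : pdx f z = fderiv ℝ f z 1 := by
    simpa [pdx, lineDeriv] using hf.lineDeriv_eq_fderiv (v := 1)
  have hy : pdy f z = fderiv ℝ f z Complex.I := by
    simpa [pdy, lineDeriv] using hf.lineDeriv_eq_fderiv (v := Complex.I)
  rw [conjGrad, hx, hy]

theorem fderiv_apply_eq_re_mul_conjGrad (f : ℂ → ℝ) (z v : ℂ) :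
    fderiv ℝ f z v = (v * conjGrad f z).re := by
  have hv : v = v.re • (1 : ℂ) + v.im • Complex.I := by simp
  nth_rw 1 [hv]
  rw [map_add, map_smul, map_smul, conjGrad]
  simp

theorem norm_conjGrad_le (f : ℂ → ℝ) (z : ℂ) : ‖conjGrad f z‖ ≤ 2 * ‖fderiv ℝ f z‖ := by
  have hx := (fderiv ℝ f z).le_opNorm 1
  have hy := (fderiv ℝ f z).le_opNorm Complex.I
  rw [norm_one, mul_one] at hx
  rw [Complex.norm_I, mul_one] at hy
  refine (norm_sub_le _ _).trans ?_
  rw [norm_mul, Complex.norm_I, mul_one, Complex.norm_real, Complex.norm_real]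
  linarith

theorem conjGrad_add (hf : DifferentiableAt ℝ f z) (hg : DifferentiableAt ℝ g z) :
    conjGrad (f + g) z = conjGrad f z + conjGrad g z := by
  simp only [conjGrad, fderiv_add hf hg, _root_.add_apply, Complex.ofReal_add]
  ring

theorem conjGrad_comp {φ : ℂ → ℂ} {φ' : ℂ} (hf : DifferentiableAt ℝ f (φ w))
    (hφ : HasDerivAt φ φ' w) : conjGrad (f ∘ φ) w = φ' * conjGrad f (φ w) := by
  have hcomp := hf.hasFDerivAt.comp w (hφ.hasFDerivAt.restrictScalars ℝ)
  have happly (v : ℂ) : fderiv ℝ (f ∘ φ) w v = (v * φ' * conjGrad f (φ w)).re := by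
    rw [hcomp.fderiv]
    simp [fderiv_apply_eq_re_mul_conjGrad f]
  rw [conjGrad, happly, happly]
  apply Complex.ext <;> simp

theorem conjGrad_comp_re {φ : ℝ → ℝ} {φ' : ℝ} (hφ : HasDerivAt φ φ' z.re) :
    conjGrad (fun w => φ w.re) z = φ' := by
  have hcomp := hφ.hasFDerivAt.comp z Complex.reCLM.hasFDerivAt
  rw [conjGrad, HasFDerivAt.fderiv (f := fun w : ℂ => φ w.re) hcomp]
  simp

theorem pdx_comp_re (φ : ℝ → ℝ) (z : ℂ) : pdx (fun w => φ w.re) z = deriv φ z.re := by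
  simpa [pdx] using deriv_comp_const_add φ z.re 0

theorem pdy_comp_re (φ : ℝ → ℝ) (z : ℂ) : pdy (fun w => φ w.re) z = 0 := by
  simp [pdy]

theorem lap_comp_re (φ : ℝ → ℝ) (z : ℂ) :
    lap (fun w => φ w.re) z = deriv (deriv φ) z.re := by
  have hx : pdx (fun w => φ w.re) = fun w => deriv φ w.re := funext (pdx_comp_re φ)
  have hy : pdy (fun w => φ w.re) = fun _ => 0 := funext (pdy_comp_re φ)
  rw [lap, hx, hy, pdx_comp_re]
  simp [pdy]

theorem lap_eq_laplacian (hf : ContDiffAt ℝ 2 f z) : lap f z = Δ f z := by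
  have hx (t : ℝ) : pdx f (z + t) = deriv (fun s : ℝ => f (z + s)) t := by
    simpa [pdx, add_assoc] using deriv_comp_const_add (fun s : ℝ => f (z + s)) t 0
  have hy (t : ℝ) : pdy f (z + t * Complex.I) = deriv (fun s : ℝ => f (z + s * Complex.I)) t := by
    simpa [pdy, add_assoc, add_mul] using
      deriv_comp_const_add (fun s : ℝ => f (z + s * Complex.I)) t 0
  rw [laplacian_eq_iteratedFDeriv_complexPlane, lap, pdx, pdy]
  simp only [iteratedFDeriv_two_apply_self_eq_deriv_deriv hf, hx, hy]
  simp

theorem deriv_deriv_comp_line {φ : ℂ → ℂ} (hf : ContDiffAt ℝ 2 f (φ w)) (hφ : AnalyticAt ℂ φ w)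
    (v : ℂ) :
    deriv (deriv fun t : ℝ => f (φ (w + t • v))) 0
      = fderiv ℝ (fderiv ℝ f) (φ w) (deriv φ w * v) (deriv φ w * v)
        + fderiv ℝ f (φ w) (deriv (deriv φ) w * v * v) := by
  have hw : Tendsto (fun t : ℝ => w + t • v) (𝓝 0) (𝓝 w) := by
    simpa using (hasDerivAt_add_smul w v 0).continuousAt.tendsto
  have hfirst : deriv (fun t : ℝ => f (φ (w + t • v)))
      =ᶠ[𝓝 0] fun t => fderiv ℝ f (φ (w + t • v)) (deriv φ (w + t • v) * v) := by
    filter_upwards [hw.eventually hφ.eventually_analyticAt,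
      hw.eventually (hφ.continuousAt.eventually (hf.eventually (by simp)))] with t hφt hft
    exact ((hft.differentiableAt two_ne_zero).hasFDerivAt.comp_hasDerivAt t
      (hφt.differentiableAt.hasDerivAt.comp t (hasDerivAt_add_smul w v t))).deriv
  have hφline : HasDerivAt (fun t : ℝ => φ (w + t • v)) (deriv φ w * v) 0 :=
    hφ.differentiableAt.hasDerivAt.comp_of_eq 0 (hasDerivAt_add_smul w v 0) (by simp)
  have hφ'line : HasDerivAt (fun t : ℝ => deriv φ (w + t • v) * v) (deriv (deriv φ) w * v * v) 0 :=
    (hφ.deriv.differentiableAt.hasDerivAt.comp_of_eq 0 (hasDerivAt_add_smul w v 0)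
      (by simp)).mul_const v
  have hf' : DifferentiableAt ℝ (fderiv ℝ f) (φ w) :=
    (hf.fderiv_right (m := 1) le_rfl).differentiableAt one_ne_zero
  have hsecond := (hf'.hasFDerivAt.comp_hasDerivAt_of_eq 0 hφline (by simp)).clm_apply hφ'line
  rw [hfirst.deriv_eq]
  exact hsecond.deriv.trans (by simp)

theorem laplacian_comp_of_analyticAt {φ : ℂ → ℂ} (hf : ContDiffAt ℝ 2 f (φ w))
    (hφ : AnalyticAt ℂ φ w) : Δ (f ∘ φ) w = ‖deriv φ w‖ ^ 2 * Δ f (φ w) := by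
  have hcomp : ContDiffAt ℝ 2 (f ∘ φ) w := hf.comp w (hφ.contDiffAt.restrict_scalars ℝ)
  have hsum : Δ (f ∘ φ) w = fderiv ℝ (fderiv ℝ f) (φ w) (deriv φ w) (deriv φ w)
      + fderiv ℝ (fderiv ℝ f) (φ w) (deriv φ w * Complex.I) (deriv φ w * Complex.I) := by
    rw [laplacian_eq_iteratedFDeriv_complexPlane]
    simp only [iteratedFDeriv_two_apply_self_eq_deriv_deriv hcomp, Function.comp_apply,
      deriv_deriv_comp_line hf hφ]
    rw [mul_assoc (deriv (deriv φ) w) Complex.I, Complex.I_mul_I]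
    simp only [mul_one, mul_neg, map_neg]
    ring
  set p := deriv φ w
  have hp : p = p.re • (1 : ℂ) + p.im • Complex.I := by simp
  have hpI : p * Complex.I = p.re • Complex.I - p.im • (1 : ℂ) := by
    apply Complex.ext <;> simp
  rw [hsum, hpI, laplacian_eq_iteratedFDeriv_complexPlane, Complex.sq_norm, Complex.normSq_apply]
  nth_rw 1 2 [hp]
  simp only [iteratedFDeriv_two_apply, map_add, map_sub, map_smul, _root_.add_apply,
    _root_.sub_apply, _root_.smul_apply, smul_eq_mul, Matrix.cons_val_zero, Matrix.cons_val_one]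
  ring

end ComplexPlane

section Connection

theorem isOpen_pdisc : IsOpen PDisc :=
  (isOpen_lt continuous_const continuous_norm).inter (isOpen_lt continuous_norm continuous_const)

/-- The `dz/z`-coefficient of the twisted differential: `dh + aφ = Re (twistedGrad h a · dz/z)`,
since `φ = -dθ = Re (i dz/z)`. -/
noncomputable def twistedGrad (h : ℂ → ℝ) (a : ℝ) (z : ℂ) : ℂ := z * conjGrad h z + Complex.I * a

/-- The `dθ`-matrix of the connection whose form is determined by
`e^u (dh + aφ) = Re (η dz/z)` and `du = Re (ξ dz/z)`. -/
noncomputable def angularMatrix (η ξ : ℂ) : Matrix (Fin 2) (Fin 2) ℝ :=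
  (1 / 2 : ℝ) • !![-(η - ξ).im, -(η - ξ).re; -(η + ξ).re, (η + ξ).im]

/-- The `dr/r`-matrix of the connection whose form is determined by
`e^u (dh + aφ) = Re (η dz/z)` and `du = Re (ξ dz/z)`. -/
noncomputable def radialMatrix (η ξ : ℂ) : Matrix (Fin 2) (Fin 2) ℝ :=
  (1 / 2 : ℝ) • !![(η - ξ).re, -(η - ξ).im; -(η + ξ).im, -(η + ξ).re]

theorem abs_angularMatrix_sub_le (η ξ η' ξ' : ℂ) (i j : Fin 2) :
    |angularMatrix η ξ i j - angularMatrix η' ξ' i j| ≤ (‖η - η'‖ + ‖ξ - ξ'‖) / 2 := by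
  have hη_re := abs_le.1 (Complex.abs_re_le_norm (η - η'))
  have hη_im := abs_le.1 (Complex.abs_im_le_norm (η - η'))
  have hξ_re := abs_le.1 (Complex.abs_re_le_norm (ξ - ξ'))
  have hξ_im := abs_le.1 (Complex.abs_im_le_norm (ξ - ξ'))
  simp only [Complex.sub_re, Complex.sub_im] at hη_re hη_im hξ_re hξ_im
  fin_cases i <;> fin_cases j <;> refine abs_le.2 ⟨?_, ?_⟩ <;> simp [angularMatrix] <;> linarith

theorem abs_radialMatrix_sub_le (η ξ η' ξ' : ℂ) (i j : Fin 2) :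
    |radialMatrix η ξ i j - radialMatrix η' ξ' i j| ≤ (‖η - η'‖ + ‖ξ - ξ'‖) / 2 := by
  have hη_re := abs_le.1 (Complex.abs_re_le_norm (η - η'))
  have hη_im := abs_le.1 (Complex.abs_im_le_norm (η - η'))
  have hξ_re := abs_le.1 (Complex.abs_re_le_norm (ξ - ξ'))
  have hξ_im := abs_le.1 (Complex.abs_im_le_norm (ξ - ξ'))
  simp only [Complex.sub_re, Complex.sub_im] at hη_re hη_im hξ_re hξ_im
  fin_cases i <;> fin_cases j <;> refine abs_le.2 ⟨?_, ?_⟩ <;> simp [radialMatrix] <;> linarith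

variable {f h u : ℂ → ℝ} {a : ℝ} {z : ℂ}

theorem norm_mul_pdr (hf : DifferentiableAt ℝ f z) (hz : z ≠ 0) :
    ‖z‖ * pdr f z = (z * conjGrad f z).re := by
  rw [pdr, mul_div_cancel₀ _ (norm_ne_zero_iff.2 hz), conjGrad_eq_pdx_sub_pdy hf]
  simp

theorem pdθ_eq_neg_im (hf : DifferentiableAt ℝ f z) :
    pdθ f z = -(z * conjGrad f z).im := by
  rw [pdθ, conjGrad_eq_pdx_sub_pdy hf]
  simp

theorem Mθ_eq_angularMatrix (hh : DifferentiableAt ℝ h z) (hu : DifferentiableAt ℝ u z)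
    (hz : z ≠ 0) :
    Mθ h u a z = angularMatrix (Real.exp (u z) * twistedGrad h a z) (z * conjGrad u z) := by
  have hhr := norm_mul_pdr hh hz
  have hur := norm_mul_pdr hu hz
  rw [Mθ, ω11r, ω11θ, ω22r, ω22θ, pdθ_eq_neg_im hh, pdθ_eq_neg_im hu, angularMatrix, twistedGrad]
  generalize z * conjGrad h z = H at *
  generalize z * conjGrad u z = U at *
  ext i j
  fin_cases i <;> fin_cases j <;> simp [-Complex.ofReal_exp, ← hhr, ← hur] <;> ring

theorem norm_smul_Mr_eq_radialMatrix (hh : DifferentiableAt ℝ h z) (hu : DifferentiableAt ℝ u z)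
    (hz : z ≠ 0) :
    ‖z‖ • Mr h u a z = radialMatrix (Real.exp (u z) * twistedGrad h a z) (z * conjGrad u z) := by
  have hhr := norm_mul_pdr hh hz
  have hur := norm_mul_pdr hu hz
  have hz' := norm_ne_zero_iff.2 hz
  rw [Mr, ω11r, ω11θ, ω22r, ω22θ, pdθ_eq_neg_im hh, pdθ_eq_neg_im hu, radialMatrix, twistedGrad]
  generalize z * conjGrad h z = H at *
  generalize z * conjGrad u z = U at *
  ext i j
  fin_cases i <;> fin_cases j <;> simp [-Complex.ofReal_exp, ← hhr, ← hur] <;> field_simp <;> ring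

theorem norm_sq_mul_twisted_energy (hh : DifferentiableAt ℝ h z) (hz : z ≠ 0) :
    ‖z‖ ^ 2 * ((pdx h z + a * z.im / ‖z‖ ^ 2) ^ 2 + (pdy h z - a * z.re / ‖z‖ ^ 2) ^ 2)
      = ‖twistedGrad h a z‖ ^ 2 := by
  have hz' := norm_ne_zero_iff.2 hz
  have hnorm : ‖z‖ ^ 2 = z.re * z.re + z.im * z.im := by rw [Complex.sq_norm, Complex.normSq_apply]
  rw [twistedGrad, conjGrad_eq_pdx_sub_pdy hh, Complex.sq_norm (_ + _), Complex.normSq_apply]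
  field_simp
  simp [hnorm]
  ring

theorem zpow_mul_twistedGrad {N : ℤ} {g : ℂ} (hh : DifferentiableAt ℝ h z) (hz : z ≠ 0)
    (hord : (pdx h z : ℂ) - (pdy h z : ℂ) * Complex.I = z ^ N * g) (n : ℤ) :
    z ^ (-(n + 1)) * twistedGrad h a z
      = z ^ (N - n) * g + z ^ (-(n + 1)) * (Complex.I * a) := by
  have hpow : z ^ (N - n) = z ^ (-(n + 1)) * z * z ^ N := by
    rw [← zpow_add_one₀ hz, ← zpow_add₀ hz]
    congr 1
    ring
  rw [twistedGrad, conjGrad_eq_pdx_sub_pdy hh, hord, hpow]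
  ring

theorem tendsto_zpow_mul_twistedGrad {G : ℂ → ℂ} {g : ℂ} {n N : ℤ}
    (hh : DifferentiableOn ℝ h PDisc) (hG : Tendsto G (𝓝[PDisc] 0) (𝓝 g))
    (hord : ∀ z ∈ PDisc, (pdx h z : ℂ) - (pdy h z : ℂ) * Complex.I = z ^ N * G z)
    (hn : n = if a = 0 then N else min (-1) N) :
    Tendsto (fun z => z ^ (-(n + 1)) * twistedGrad h a z) (𝓝[PDisc] 0)
      (𝓝 (0 ^ (N - n) * g + 0 ^ (-(n + 1)) * (Complex.I * a))) := by
  have hpow {m : ℤ} (hm : 0 ≤ m) : Tendsto (fun z : ℂ => z ^ m) (𝓝[PDisc] 0) (𝓝 (0 ^ m)) :=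
    (continuousAt_zpow₀ 0 m (Or.inr hm)).tendsto.mono_left nhdsWithin_le_nhds
  have hres : Tendsto (fun z : ℂ => z ^ (-(n + 1)) * (Complex.I * a)) (𝓝[PDisc] 0)
      (𝓝 (0 ^ (-(n + 1)) * (Complex.I * a))) := by
    by_cases ha : a = 0
    · simp [ha, tendsto_const_nhds]
    · rw [if_neg ha] at hn
      exact (hpow (by lia)).mul_const _
  have hNn : 0 ≤ N - n := by split_ifs at hn <;> lia
  refine (((hpow hNn).mul hG).add hres).congr' ?_
  filter_upwards [self_mem_nhdsWithin] with z hz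
  have hhz := (hh z hz).differentiableAt (isOpen_pdisc.mem_nhds hz)
  exact (zpow_mul_twistedGrad hhz (norm_pos_iff.1 hz.1) (hord z hz) n).symm

end Connection

section Cylinder

open InnerProductSpace Laplacian Asymptotics

theorem exp_mem_pdisc {w : ℂ} (hw : w.re < 0) : Complex.exp w ∈ PDisc := by
  simpa [PDisc, Complex.norm_exp, Real.exp_pos] using hw

theorem tendsto_exp_comap_re_atBot_nhdsWithin_pdisc :
    Tendsto Complex.exp (comap Complex.re atBot) (𝓝[PDisc] 0) :=
  tendsto_nhdsWithin_iff.2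
    ⟨Complex.comap_exp_nhds_zero ▸ tendsto_comap, eventually_re_neg.mono fun _ => exp_mem_pdisc⟩

theorem exists_radius_of_eventually_comap_re {P : ℂ → Prop}
    (hP : ∀ᶠ w in comap Complex.re atBot, P w) :
    ∃ δ : ℝ, 0 < δ ∧ δ < 1 ∧
      ∀ r θ : ℝ, 0 < r → r < δ → P (Real.log r + θ * Complex.I) := by
  obtain ⟨B, hB⟩ := eventually_atBot.1 (eventually_comap.1 hP)
  refine ⟨Real.exp (min B (-1)), Real.exp_pos _, by simp, fun r θ hr hrδ => ?_⟩
  refine hB (Real.log r) ?_ _ (by simp)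
  exact ((Real.log_lt_iff_lt_exp hr).2 hrδ).le.trans (min_le_left _ _)

theorem exp_log_add_mul_I {r : ℝ} (hr : 0 < r) (θ : ℝ) :
    Complex.exp (Real.log r + θ * Complex.I) = r * Complex.exp (θ * Complex.I) := by
  rw [Complex.exp_add, ← Complex.ofReal_exp, Real.exp_log hr]

/-- The potential `u` in the coordinate `w = log z`, with its logarithmic singularities
`-(n + 1) log |z| - log |log |z||` removed; recall that `Real.log x` is `log |x|`. -/
noncomputable def cylPotential (u : ℂ → ℝ) (n : ℤ) (w : ℂ) : ℝ :=
  u (Complex.exp w) + (((n : ℝ) + 1) * w.re + Real.log w.re)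

/-- The normalised coefficient `A` of the twisted differential in the coordinate `w = log z`:
`e^u (dh + aφ) = -Re (A e^{i (n + 1) Im w} dw) / Re w`. -/
noncomputable def cylCoeff (h u : ℂ → ℝ) (a : ℝ) (n : ℤ) (w : ℂ) : ℂ :=
  Real.exp (cylPotential u n w) *
    (Complex.exp w ^ (-(n + 1)) * twistedGrad h a (Complex.exp w))

variable {h u : ℂ → ℝ} {a c : ℝ} {n : ℤ} {b k w : ℂ}

theorem contDiffAt_cylPotential_radial (n : ℤ) (hw : w.re ≠ 0) :
    ContDiffAt ℝ 2 (fun w : ℂ => ((n : ℝ) + 1) * w.re + Real.log w.re) w := by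
  have hre : ContDiffAt ℝ 2 Complex.re w := Complex.reCLM.contDiff.contDiffAt
  exact (contDiffAt_const.mul hre).add (hre.log hw)

theorem contDiffAt_comp_exp (hu : ContDiffAt ℝ 2 u (Complex.exp w)) :
    ContDiffAt ℝ 2 (u ∘ Complex.exp) w :=
  hu.comp w Complex.contDiff_exp.contDiffAt

theorem contDiffAt_cylPotential (hu : ContDiffAt ℝ 2 u (Complex.exp w)) (hw : w.re ≠ 0) :
    ContDiffAt ℝ 2 (cylPotential u n) w :=
  (contDiffAt_comp_exp hu).add (contDiffAt_cylPotential_radial n hw)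

theorem hasDerivAt_mul_add_log (m : ℝ) {x : ℝ} (hx : x ≠ 0) :
    HasDerivAt (fun x => m * x + Real.log x) (m + x⁻¹) x := by
  simpa using ((hasDerivAt_id x).const_mul m).fun_add (Real.hasDerivAt_log hx)

theorem conjGrad_cylPotential (hu : DifferentiableAt ℝ u (Complex.exp w)) (hw : w.re ≠ 0) :
    conjGrad (cylPotential u n) w
      = Complex.exp w * conjGrad u (Complex.exp w) + ((n + 1 : ℝ) + w.re⁻¹ : ℝ) := by
  rw [← conjGrad_comp hu (Complex.hasDerivAt_exp w),
    ← conjGrad_comp_re (hasDerivAt_mul_add_log (n + 1) hw)]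
  exact conjGrad_add (hu.comp w Complex.differentiable_exp.differentiableAt)
    ((contDiffAt_cylPotential_radial n hw).differentiableAt two_ne_zero)

theorem laplacian_cylPotential (hu : ContDiffAt ℝ 2 u (Complex.exp w)) (hw : w.re ≠ 0) :
    Δ (cylPotential u n) w
      = ‖Complex.exp w‖ ^ 2 * lap u (Complex.exp w) - (w.re ^ 2)⁻¹ := by
  have hderiv : deriv (fun x => ((n : ℝ) + 1) * x + Real.log x)
      =ᶠ[𝓝 w.re] fun x => ((n : ℝ) + 1) + x⁻¹ := by
    filter_upwards [isOpen_ne.mem_nhds hw] with x hx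
    exact (hasDerivAt_mul_add_log _ hx).deriv
  have hradial : Δ (fun w : ℂ => ((n : ℝ) + 1) * w.re + Real.log w.re) w = -(w.re ^ 2)⁻¹ := by
    rw [← lap_eq_laplacian (contDiffAt_cylPotential_radial n hw),
      lap_comp_re fun x => ((n : ℝ) + 1) * x + Real.log x, hderiv.deriv_eq]
    simp
  have hexp : Δ (u ∘ Complex.exp) w = ‖Complex.exp w‖ ^ 2 * lap u (Complex.exp w) := by
    rw [laplacian_comp_of_analyticAt hu analyticAt_cexp, lap_eq_laplacian hu]
    simp
  rw [sub_eq_add_neg, ← hradial, ← hexp]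
  exact (contDiffAt_comp_exp hu).laplacian_add (contDiffAt_cylPotential_radial n hw)

theorem tendsto_cylPotential
    (hlog : Tendsto (fun z => u z + ((n : ℝ) + 1) * Real.log ‖z‖ + Real.log |Real.log ‖z‖|)
      (𝓝[PDisc] 0) (𝓝 c)) :
    Tendsto (cylPotential u n) (comap Complex.re atBot) (𝓝 c) := by
  refine (hlog.comp tendsto_exp_comap_re_atBot_nhdsWithin_pdisc).congr fun w => ?_
  simp [cylPotential, Complex.norm_exp, add_assoc]

theorem tendsto_cylCoeff
    (hlog : Tendsto (fun z => u z + ((n : ℝ) + 1) * Real.log ‖z‖ + Real.log |Real.log ‖z‖|)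
      (𝓝[PDisc] 0) (𝓝 c))
    (hlead : Tendsto (fun z => z ^ (-(n + 1)) * twistedGrad h a z) (𝓝[PDisc] 0) (𝓝 k)) :
    Tendsto (cylCoeff h u a n) (comap Complex.re atBot) (𝓝 (Real.exp c * k)) :=
  ((Real.continuous_exp.tendsto c).comp (tendsto_cylPotential hlog)).ofReal.mul
    (hlead.comp tendsto_exp_comap_re_atBot_nhdsWithin_pdisc)

theorem exp_mul_twistedGrad_exp (hw : w.re < 0) :
    Real.exp (u (Complex.exp w)) * twistedGrad h a (Complex.exp w)
      = -(w.re : ℂ)⁻¹ *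
        (cylCoeff h u a n w * Complex.exp ((((n : ℝ) + 1) * w.im : ℝ) * Complex.I)) := by
  have hw' : (w.re : ℂ) ≠ 0 := by exact_mod_cast hw.ne
  have hV : (Real.exp (cylPotential u n w) : ℂ)
      = Real.exp (u (Complex.exp w)) * (Complex.exp ((n + 1) * w.re) * -w.re) := by
    rw [cylPotential, Real.exp_add, Real.exp_add, Real.exp_log_of_neg hw]
    simp
  have hphase : Complex.exp ((n + 1) * w.re) * Complex.exp w ^ (-(n + 1))
      * Complex.exp ((((n : ℝ) + 1) * w.im : ℝ) * Complex.I) = 1 := by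
    rw [← Complex.exp_int_mul, ← Complex.exp_add, ← Complex.exp_add, Complex.exp_eq_one_iff]
    refine ⟨0, ?_⟩
    nth_rw 2 [← Complex.re_add_im w]
    push_cast
    ring
  rw [cylCoeff, hV]
  linear_combination
    -(Real.exp (u (Complex.exp w)) : ℂ) * twistedGrad h a (Complex.exp w) *
      (hphase * (w.re : ℂ)⁻¹ * w.re + inv_mul_cancel₀ hw')

theorem re_sq_mul_laplacian_cylPotential (hh : DifferentiableAt ℝ h (Complex.exp w))
    (hu : ContDiffAt ℝ 2 u (Complex.exp w)) (hw : w.re < 0)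
    (hpde : ∀ z ∈ PDisc, lap u z
      = ((pdx h z + a * z.im / ‖z‖ ^ 2) ^ 2 + (pdy h z - a * z.re / ‖z‖ ^ 2) ^ 2)
        * Real.exp (2 * u z)) :
    w.re ^ 2 * Δ (cylPotential u n) w = ‖cylCoeff h u a n w‖ ^ 2 - 1 := by
  have hcoeff : ‖twistedGrad h a (Complex.exp w)‖ ^ 2 * Real.exp (2 * u (Complex.exp w))
      = (w.re ^ 2)⁻¹ * ‖cylCoeff h u a n w‖ ^ 2 := by
    have hnorm := congrArg (‖·‖ ^ 2)
      (exp_mul_twistedGrad_exp (h := h) (u := u) (a := a) (n := n) hw)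
    simp only [norm_mul, norm_neg, norm_inv, Complex.norm_exp_ofReal_mul_I, mul_one, mul_pow,
      Complex.norm_real, Real.norm_eq_abs, Real.abs_exp, inv_pow, sq_abs] at hnorm
    rw [← hnorm, two_mul, Real.exp_add]
    ring
  have hw' := hw.ne
  rw [laplacian_cylPotential hu hw.ne, hpde _ (exp_mem_pdisc hw), ← mul_assoc,
    norm_sq_mul_twisted_energy hh (Complex.exp_ne_zero w), hcoeff]
  field_simp

theorem tendsto_re_sq_mul_laplacian_cylPotential
    (hh : DifferentiableOn ℝ h PDisc) (hu : ContDiffOn ℝ 2 u PDisc)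
    (hpde : ∀ z ∈ PDisc, lap u z
      = ((pdx h z + a * z.im / ‖z‖ ^ 2) ^ 2 + (pdy h z - a * z.re / ‖z‖ ^ 2) ^ 2)
        * Real.exp (2 * u z))
    (hA : Tendsto (cylCoeff h u a n) (comap Complex.re atBot) (𝓝 b)) :
    Tendsto (fun w : ℂ => w.re ^ 2 * Δ (cylPotential u n) w) (comap Complex.re atBot)
      (𝓝 (‖b‖ ^ 2 - 1)) := by
  refine ((hA.norm.pow 2).sub_const 1).congr' ?_
  filter_upwards [eventually_re_neg] with w hw
  have hmem := isOpen_pdisc.mem_nhds (exp_mem_pdisc hw)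
  exact (re_sq_mul_laplacian_cylPotential (hh.differentiableAt hmem) (hu.contDiffAt hmem) hw
    hpde).symm

theorem isLittleO_exp_mul_twistedGrad_sub
    (hA : Tendsto (cylCoeff h u a n) (comap Complex.re atBot) (𝓝 b)) :
    (fun w => Real.exp (u (Complex.exp w)) * twistedGrad h a (Complex.exp w)
        - -(w.re : ℂ)⁻¹ * (b * Complex.exp ((((n : ℝ) + 1) * w.im : ℝ) * Complex.I)))
      =o[comap Complex.re atBot] fun w => w.re⁻¹ := by
  refine isLittleO_iff.2 fun ε hε => ?_
  filter_upwards [Metric.tendsto_nhds.1 hA ε hε, eventually_re_neg] with w hAw hw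
  rw [exp_mul_twistedGrad_exp hw, ← mul_sub, ← sub_mul, norm_mul, norm_mul,
    Complex.norm_exp_ofReal_mul_I, mul_one, norm_neg, norm_inv, norm_inv, Complex.norm_real,
    mul_comm, ← dist_eq_norm]
  gcongr

theorem isLittleO_exp_mul_conjGrad_sub
    (hu : ∀ᶠ w in comap Complex.re atBot, DifferentiableAt ℝ u (Complex.exp w))
    (hV : fderiv ℝ (cylPotential u n) =o[comap Complex.re atBot] fun w => w.re⁻¹) :
    (fun w => Complex.exp w * conjGrad u (Complex.exp w) - (-((n + 1 : ℝ) + w.re⁻¹) : ℝ))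
      =o[comap Complex.re atBot] fun w => w.re⁻¹ := by
  refine IsBigO.trans_isLittleO (IsBigO.of_bound 2 ?_) hV
  filter_upwards [hu, eventually_re_neg] with w huw hw
  rw [Complex.ofReal_neg, sub_neg_eq_add, ← conjGrad_cylPotential huw hw.ne]
  exact norm_conjGrad_le _ _

theorem logModelθ_eq_angularMatrix (n : ℤ) (b : ℂ) (r θ : ℝ) :
    logModelθ n b r θ = angularMatrix
      (-(Real.log r : ℂ)⁻¹ * (b * Complex.exp ((((n : ℝ) + 1) * θ : ℝ) * Complex.I)))
      (-((n + 1 : ℝ) + (Real.log r)⁻¹) : ℝ) := by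
  rw [logModelθ, angularMatrix, ← Complex.ofReal_inv]
  generalize b * Complex.exp ((((n : ℝ) + 1) * θ : ℝ) * Complex.I) = β
  ext i j
  fin_cases i <;> fin_cases j <;> simp [-Complex.ofReal_inv] <;> ring

theorem logModelr_eq_radialMatrix (n : ℤ) (b : ℂ) (r θ : ℝ) :
    logModelr n b r θ = radialMatrix
      (-(Real.log r : ℂ)⁻¹ * (b * Complex.exp ((((n : ℝ) + 1) * θ : ℝ) * Complex.I)))
      (-((n + 1 : ℝ) + (Real.log r)⁻¹) : ℝ) := by
  rw [logModelr, radialMatrix, ← Complex.ofReal_inv]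
  generalize b * Complex.exp ((((n : ℝ) + 1) * θ : ℝ) * Complex.I) = β
  ext i j
  fin_cases i <;> fin_cases j <;> simp [-Complex.ofReal_inv] <;> ring

end Cylinder

section LogarithmicModel

open Asymptotics

variable {h u : ℂ → ℝ} {a : ℝ} {n : ℤ} {b : ℂ}

theorem eventually_abs_connection_sub_logModel_le
    (hh : DifferentiableOn ℝ h PDisc) (hu : DifferentiableOn ℝ u PDisc)
    (hA : Tendsto (cylCoeff h u a n) (comap Complex.re atBot) (𝓝 b))
    (hV : fderiv ℝ (cylPotential u n) =o[comap Complex.re atBot] fun w => w.re⁻¹)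
    {ε : ℝ} (hε : 0 < ε) :
    ∀ᶠ w in comap Complex.re atBot, ∀ i j : Fin 2,
      |Mθ h u a (Complex.exp w) i j - logModelθ n b (Real.exp w.re) w.im i j| ≤ ε * |w.re|⁻¹ ∧
      |Real.exp w.re * Mr h u a (Complex.exp w) i j - logModelr n b (Real.exp w.re) w.im i j|
        ≤ ε * |w.re|⁻¹ := by
  have hdiff {f : ℂ → ℝ} (hf : DifferentiableOn ℝ f PDisc) :
      ∀ᶠ w in comap Complex.re atBot, DifferentiableAt ℝ f (Complex.exp w) :=
    eventually_re_neg.mono fun w hw =>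
      hf.differentiableAt (isOpen_pdisc.mem_nhds (exp_mem_pdisc hw))
  filter_upwards [hdiff hh, hdiff hu, (isLittleO_exp_mul_twistedGrad_sub hA).def hε,
    (isLittleO_exp_mul_conjGrad_sub (hdiff hu) hV).def hε] with w hhw huw hη hξ i j
  rw [norm_inv, Real.norm_eq_abs] at hη hξ
  have hMr := congrFun₂ (norm_smul_Mr_eq_radialMatrix (a := a) hhw huw (Complex.exp_ne_zero w)) i j
  rw [Matrix.smul_apply, smul_eq_mul, Complex.norm_exp] at hMr
  rw [Mθ_eq_angularMatrix hhw huw (Complex.exp_ne_zero w), hMr, logModelθ_eq_angularMatrix,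
    logModelr_eq_radialMatrix, Real.log_exp]
  exact ⟨(abs_angularMatrix_sub_le _ _ _ _ i j).trans (by linarith),
    (abs_radialMatrix_sub_le _ _ _ _ i j).trans (by linarith)⟩

end LogarithmicModel

theorem stmt13_general (a : ℝ) (h u : ℂ → ℝ)
    (hh : DifferentiableOn ℝ h PDisc) (hu : ContDiffOn ℝ 2 u PDisc)
    (hpde : ∀ z ∈ PDisc, lap u z
      = ((pdx h z + a * z.im / ‖z‖ ^ 2) ^ 2 + (pdy h z - a * z.re / ‖z‖ ^ 2) ^ 2)
        * Real.exp (2 * u z))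
    (n : ℤ) (k : ℂ)
    (hlead : Tendsto (fun z => z ^ (-(n + 1)) * twistedGrad h a z) (𝓝[PDisc] 0) (𝓝 k))
    (c : ℝ)
    (hlog : Tendsto
      (fun z => u z + ((n : ℝ) + 1) * Real.log ‖z‖ + Real.log |Real.log ‖z‖|)
      (𝓝[PDisc] 0) (𝓝 c)) :
    ∃ b : ℂ, ‖b‖ = 1 ∧
      ∀ ε > (0 : ℝ), ∃ δ : ℝ, 0 < δ ∧ δ < 1 ∧
        ∀ r θ : ℝ, 0 < r → r < δ → ∀ i j : Fin 2,
          |Mθ h u a ((r : ℂ) * Complex.exp ((θ : ℝ) * Complex.I)) i j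
              - logModelθ n b r θ i j| ≤ ε * |Real.log r|⁻¹ ∧
          |r * Mr h u a ((r : ℂ) * Complex.exp ((θ : ℝ) * Complex.I)) i j
              - logModelr n b r θ i j| ≤ ε * |Real.log r|⁻¹ := by
  have hdiff : ∀ᶠ w in comap Complex.re atBot, ContDiffAt ℝ 2 (cylPotential u n) w :=
    eventually_re_neg.mono fun w hw => contDiffAt_cylPotential
      (hu.contDiffAt (isOpen_pdisc.mem_nhds (exp_mem_pdisc hw))) hw.ne
  have hV := tendsto_cylPotential hlog
  have hA := tendsto_cylCoeff hlog hlead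
  have hΔ := tendsto_re_sq_mul_laplacian_cylPotential hh hu hpde hA
  have hb := eq_zero_of_tendsto_re_sq_mul_laplacian hdiff hV hΔ
  have hgrad := fderiv_isLittleO_re_inv hdiff hV (hb ▸ hΔ)
  have hnorm : ‖Real.exp c * k‖ = 1 :=
    (pow_eq_one_iff_of_nonneg (norm_nonneg _) two_ne_zero).1 (sub_eq_zero.1 hb)
  refine ⟨Real.exp c * k, hnorm, fun ε hε => ?_⟩
  obtain ⟨δ, hδ, hδ1, hbound⟩ := exists_radius_of_eventually_comap_re
    (eventually_abs_connection_sub_logModel_le hh (hu.differentiableOn two_ne_zero) hA hgrad hε)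
  refine ⟨δ, hδ, hδ1, fun r θ hr hrδ => ?_⟩
  simpa [exp_log_add_mul_I hr, Real.exp_log hr] using hbound r θ hr hrδ

theorem stmt13 (a : ℝ) (h u : ℂ → ℝ)
    (hh : ContDiffOn ℝ 2 h PDisc) (hu : ContDiffOn ℝ 2 u PDisc)
    (hharm : ∀ z ∈ PDisc, lap h z = 0)
    (hpde : ∀ z ∈ PDisc, lap u z
      = ((pdx h z + a * z.im / ‖z‖ ^ 2) ^ 2 + (pdy h z - a * z.re / ‖z‖ ^ 2) ^ 2)
        * Real.exp (2 * u z))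
    (N : ℤ) (G : ℂ → ℂ)
    (hGhol : DifferentiableOn ℂ G (Metric.ball (0 : ℂ) 1)) (hG0 : G 0 ≠ 0)
    (hord : ∀ z ∈ PDisc, (pdx h z : ℂ) - (pdy h z : ℂ) * Complex.I = z ^ N * G z)
    (n : ℤ) (hn : n = if a = 0 then N else min (-1) N)
    (c : ℝ)
    (hlog : Tendsto
      (fun z => u z + ((n : ℝ) + 1) * Real.log ‖z‖ + Real.log |Real.log ‖z‖|)
      (𝓝[PDisc] 0) (𝓝 c)) :
    ∃ b : ℂ, ‖b‖ = 1 ∧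
      ∀ ε > (0 : ℝ), ∃ δ : ℝ, 0 < δ ∧ δ < 1 ∧
        ∀ r θ : ℝ, 0 < r → r < δ → ∀ i j : Fin 2,
          |Mθ h u a ((r : ℂ) * Complex.exp ((θ : ℝ) * Complex.I)) i j
              - logModelθ n b r θ i j| ≤ ε * |Real.log r|⁻¹ ∧
          |r * Mr h u a ((r : ℂ) * Complex.exp ((θ : ℝ) * Complex.I)) i j
              - logModelr n b r θ i j| ≤ ε * |Real.log r|⁻¹ := by
  have hG := (hGhol.continuousOn.continuousAt (Metric.ball_mem_nhds 0 one_pos)).tendsto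
  exact stmt13_general a h u (hh.differentiableOn two_ne_zero) hu hpde n _
    (tendsto_zpow_mul_twistedGrad (hh.differentiableOn two_ne_zero)
      (hG.mono_left nhdsWithin_le_nhds) hord hn) c hlog
end
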